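/- arXiv:2601.07066 — 15 statements merged into one kernel-verified Lean document; each statement's English description precedes it below -/
import Mathlib

section
/- Let K be a field of characteristic zero, let n ≥ 1, and let A be an associative (not necessarily unital) K-algebra satisfying the identities x(xy − yx) = 0 for all x, y ∈ A and xⁿ = 0 for all x ∈ A. Then every product of n + 1 elements of A is zero, i.e. x₁x₂⋯x₊₁ = 0 for all x₁, …, x₊₁ ∈ A. -/
/-- `powSucc x n` is the power `x ^ (n + 1)` in a (possibly non-unital) multiplicative
structure: `powSucc x 0 = x` and `powSucc x (n + 1) = powSucc x n * x`. -/
def powSucc {A : Type*} [Mul A] (x : A) : ℕ → A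
  | 0 => x
  | n + 1 => powSucc x n * x

section
variable {A : Type*} [NonUnitalRing A]

theorem aux_lin (h1 : ∀ x y : A, x * (x * y - y * x) = 0) (x z y : A) :
    x*z*y - x*y*z + z*x*y - z*y*x = 0 := by
  have a := h1 (x+z) y
  have b := h1 x y
  have c := h1 z y
  have : x*z*y - x*y*z + z*x*y - z*y*x = (x+z)*((x+z)*y-y*(x+z)) - x * (x * y - y * x) - z * (z * y - y * z) := by
    noncomm_ring
  rw [this, a, b, c]; simp

/-- alternation of `x[y,z]` -/
theorem aux_f1 (h1 : ∀ x y : A, x * (x * y - y * x) = 0) (x y z : A) :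
    x*(y*z-z*y) = -(y*(x*z-z*x)) := by
  have := aux_lin h1 x y z
  rw [← sub_eq_zero, ← this]; noncomm_ring

theorem aux_f2 (x y z : A) :
    x*(y*z-z*y) = -(x*(z*y-y*z)) := by
  noncomm_ring

theorem aux_G (ht : ∀ (n : ℕ) (a : A), n ≠ 0 → n • a = 0 → a = 0)
    (h1 : ∀ x y : A, x * (x * y - y * x) = 0) :
  (∀ x y z w : A, x*y*z*w = x*y*w*z) ∧ (∀ x y z w : A, x*y*z*w = x*z*y*w) := by
  have g23 (a b c d : A) : a*b*(c*d-d*c) = -(a*c*(b*d-d*b)) := by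
    rw [mul_assoc, aux_f1 h1, mul_assoc, mul_neg]
  have g34 (a b c d : A) : a*b*(c*d-d*c) = -(a*b*(d*c-c*d)) := by noncomm_ring
  -- x[y,z]w
  have key (x y z w : A) : x*(y*z-z*y)*w = z*w*(x*y-y*x) + x*w*(y*z-z*y) := by
    have e1 : x*(y*(z*w)-(z*w)*y) = (z*w)*(x*y-y*x) := by
      rw [aux_f2, aux_f1 h1, neg_neg]
    have e2 := g23 x w y z
    have e3 : x*(y*(z*w)-(z*w)*y) = x*(y*z-z*y)*w + x*z*(y*w-w*y) := by noncomm_ring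
    rw [← e1, e3, g23 x w y z, g34 x y w z, g23 x y z w]; abel
  have g13' (x w z : A) : x*w*(x*z-z*x) = 0 := by
    have := key x x z w
    rw [h1, zero_mul, sub_self, mul_zero, zero_add] at this
    exact this.symm
  have g13 (x y w z : A) : x*w*(y*z-z*y) = - (y*w*(x*z-z*x)) := by
    have a := g13' (x+y) w z
    have b := g13' x w z
    have c := g13' y w z
    rw [← sub_eq_zero]
    have : x*w*(y*z-z*y) - - (y*w*(x*z-z*x)) = (x+y)*w*((x+y)*z-z*(x+y)) - x*w*(x*z-z*x) - y*w*(y*z-z*y) := by noncomm_ring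
    rw [this, a, b, c]; simp
  have H (x y z w : A) : x*(y*z-z*y)*w = x*y*(z*w-w*z) + x*y*(z*w-w*z) := by
    rw [key]
    congr 1
    · rw [g13 z x w y, g23 x w z y, g34 x z w y, g23 x z y w]; simp
    · rw [g23 x w, g34 x y w z]; simp
  have G0 (x y z w : A) : x*y*(z*w-w*z) = 0 := by
    apply ht 3 _ (by norm_num)
    have c1 : x*w*(y*z-z*y) = x*y*(z*w-w*z) := by
      rw [g23 x w, g34 x y w z]; simp
    have c2 : x*z*(w*y-y*w) = x*y*(z*w-w*z) := by
      rw [g34 x z w y, g23 x z y w]; simp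
    have d1 := H x y w z
    have d2 := H x w z y
    have d3 := H x z y w
    have c1' := c1
    have c2' := c2
    rw [g34 x y w z] at d1
    rw [g34 x w z y, c1] at d2
    rw [g34 x z y w, c2] at d3
    have hex : x*y*(z*w-w*z) + x*(y*w-w*y)*z + x*w*(y*z-z*y) + x*(w*z-z*w)*y
      + x*z*(w*y-y*w) + x*(z*y-y*z)*w = 0 := by noncomm_ring
    rw [d1, d2, d3, c1, c2] at hex
    rw [← neg_eq_zero, ← hex]
    abel
  refine ⟨fun x y z w => ?_, fun x y z w => ?_⟩
  · rw [← sub_eq_zero, ← G0 x y z w]; noncomm_ring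
  · have := H x y z w
    rw [G0, add_zero] at this
    rw [← sub_eq_zero, ← this]; noncomm_ring

theorem aux_perm2 (hG : ∀ x y z w : A, x*y*z*w = x*y*w*z) {l l' : List A} (h : l.Perm l') :
    ∀ p q : A, l.foldl (· * ·) (p * q) = l'.foldl (· * ·) (p * q) := by
  induction h with
  | nil => intros; rfl
  | cons a _ ih => intro p q; exact ih (p * q) a
  | swap a b l => intro p q; simp only [List.foldl_cons]; rw [hG]
  | trans _ _ i1 i2 => intro p q; rw [i1, i2]

theorem aux_perm (hG : ∀ x y z w : A, x*y*z*w = x*y*w*z)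
    (hH : ∀ x y z w : A, x*y*z*w = x*z*y*w) {l l' : List A} (h : l.Perm l') :
    3 ≤ l.length → ∀ p : A, l.foldl (· * ·) p = l'.foldl (· * ·) p := by
  induction h with
  | nil => intros; rfl
  | cons a h ih => intro _ p; exact aux_perm2 hG h p a
  | swap a b l =>
    intro hl p
    cases l with
    | nil => simp at hl
    | cons c l => simp only [List.foldl_cons]; rw [hH]
  | trans h _ i1 i2 => intro hl p; rw [i1 hl, i2 (h.length_eq ▸ hl)]

theorem aux_replicate (x y : A) (n : ℕ) :
    (List.replicate (n+1) y).foldl (· * ·) x = x * powSucc y n := by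
  induction n with
  | zero => simp [powSucc]
  | succ n ih => rw [List.replicate_succ', List.foldl_append, ih]; simp [powSucc, mul_assoc]

/-- polarization -/
theorem aux_polar {K V W : Type*} [Field K] [CharZero K] [AddCommGroup V] [Module K V]
    [AddCommGroup W] [Module K W] {n : ℕ} (f : MultilinearMap K (fun _ : Fin n => V) W)
    (y : Fin n → V) (h0 : ∀ T : Finset (Fin n), f (fun _ => ∑ i ∈ T, y i) = 0)
    (hs : ∀ σ : Equiv.Perm (Fin n), f (fun i => y (σ i)) = f y) : f y = 0 := by
  classical
  have e : ∑ T : Finset (Fin n), (-1 : ℤ)^T.card • f (fun _ => ∑ i ∈ Tᶜ, y i) = 0 := by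
    simp [h0]
  simp only [MultilinearMap.map_sum_finset] at e
  have e2 : ∀ T : Finset (Fin n), (-1 : ℤ)^T.card •
      (∑ r ∈ Fintype.piFinset (fun _ : Fin n => Tᶜ), f (fun i => y (r i))) =
      ∑ r : Fin n → Fin n, if T ∈ ((Finset.univ.image r)ᶜ).powerset then
        (-1 : ℤ)^T.card • f (fun i => y (r i)) else 0 := by
    intro T
    rw [Finset.smul_sum, ← Finset.sum_filter]
    apply Finset.sum_congr _ (fun _ _ => rfl)
    ext r
    simp only [Fintype.mem_piFinset, Finset.mem_compl, Finset.mem_powerset, Finset.mem_filter,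
      Finset.mem_univ, true_and, Finset.subset_iff, Finset.mem_image, not_exists]
    constructor
    · rintro h t ht i rfl
      exact h i ht
    · intro h i hi
      exact h hi i rfl
  simp only [e2] at e
  rw [Finset.sum_comm] at e
  have e3 : ∀ r : Fin n → Fin n, (∑ T : Finset (Fin n), if T ∈ ((Finset.univ.image r)ᶜ).powerset then
        (-1 : ℤ)^T.card • f (fun i => y (r i)) else 0) =
        if Function.Bijective r then f y else 0 := by
    intro r
    rw [← Finset.sum_filter, Finset.filter_mem_eq_inter, Finset.univ_inter, ← Finset.sum_smul,
      Finset.sum_powerset_neg_one_pow_card]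
    have hb : (Finset.univ.image r)ᶜ = ∅ ↔ Function.Bijective r := by
      rw [Finset.compl_eq_empty_iff, ← Finite.surjective_iff_bijective, Finset.eq_univ_iff_forall]
      simp [Function.Surjective]
    by_cases h : Function.Bijective r
    · rw [if_pos (hb.2 h), if_pos h, one_smul]
      exact hs (Equiv.ofBijective r h)
    · rw [if_neg (fun h' => h (hb.1 h')), if_neg h, zero_smul]
  simp only [e3] at e
  rw [← Finset.sum_filter, Finset.sum_const, ← Nat.cast_smul_eq_nsmul K, smul_eq_zero] at e
  rcases e with e | e
  · exfalso
    rw [Nat.cast_eq_zero, Finset.card_eq_zero] at e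
    have : (id : Fin n → Fin n) ∈ (∅ : Finset (Fin n → Fin n)) := by
      rw [← e]; exact Finset.mem_filter.2 ⟨Finset.mem_univ _, Function.bijective_id⟩
    simp at this
  · exact e

theorem aux_inr {K : Type*} [Field K] [Module K A] [SMulCommClass K A A] [IsScalarTower K A A]
    (l : List A) : ∀ x : A, (Unitization.inr (l.foldl (· * ·) x) : Unitization K A) =
      Unitization.inr x * (l.map (fun a => (Unitization.inr a : Unitization K A))).prod := by
  induction l with
  | nil => simp
  | cons a l ih => intro x; simp only [List.foldl_cons, List.map_cons, List.prod_cons]; rw [ih, Unitization.inr_mul, mul_assoc]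
end

/-- Let `K` be a field of characteristic zero, `n ≥ 1`, and `A` an associative
(not necessarily unital) `K`-algebra satisfying `x * (x*y - y*x) = 0` and `x^n = 0`.
Then every product of `n + 1` elements of `A` is zero. -/
theorem stmt_0 (K : Type*) [Field K] [CharZero K]
    (A : Type*) [NonUnitalRing A] [Module K A] [SMulCommClass K A A] [IsScalarTower K A A]
    (n : ℕ) (hn : 1 ≤ n)
    (h1 : ∀ x y : A, x * (x * y - y * x) = 0)
    (h2 : ∀ x : A, powSucc x (n - 1) = 0) :
    ∀ (x : A) (l : List A), l.length = n → l.foldl (· * ·) x = 0 := by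
  have ht : ∀ (m : ℕ) (a : A), m ≠ 0 → m • a = 0 → a = 0 := by
    intro m a hm h
    rw [← Nat.cast_smul_eq_nsmul K, smul_eq_zero] at h
    exact h.resolve_left (by exact_mod_cast hm)
  intro x l hl
  obtain ⟨m, rfl⟩ : ∃ m, n = m + 1 := ⟨n - 1, by omega⟩
  simp only [Nat.add_sub_cancel] at h2
  have hcase : m = 0 ∨ m = 1 ∨ 2 ≤ m := by omega
  rcases hcase with rfl | rfl | hm
  · exact h2 _
  · have hsq : ∀ a : A, a * a = 0 := h2
    have anti : ∀ a b : A, a * b = - (b * a) := by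
      intro a b
      have h := hsq (a + b)
      rw [add_mul, mul_add, mul_add, hsq, hsq, zero_add, add_zero] at h
      exact eq_neg_of_add_eq_zero_left h
    obtain ⟨y, z, rfl⟩ := List.length_eq_two.1 hl
    simp only [List.foldl_cons, List.foldl_nil]
    have e : x * y * z = - (x * y * z) := by
      calc x * y * z = - (z * (x * y)) := anti _ _
        _ = - (z * x * y) := by rw [mul_assoc]
        _ = x * z * y := by rw [anti z x]; simp
        _ = - (x * y * z) := by rw [mul_assoc, anti z y, mul_neg, mul_assoc]
    apply ht 2 _ (by norm_num)
    rw [two_nsmul]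
    nth_rewrite 1 [e]
    exact neg_add_cancel _
  · obtain ⟨hG, hH⟩ := aux_G ht h1
    let φ : A →ₗ[K] Unitization K A := Unitization.inrHom K K A
    let f0 : MultilinearMap K (fun _ : Fin (m+1) => A) (Unitization K A) :=
      ((LinearMap.mulLeft K (φ x)).compMultilinearMap
        (MultilinearMap.mkPiAlgebraFin K (m+1) (Unitization K A))).compLinearMap (fun _ => φ)
    have hf : ∀ y : Fin (m+1) → A,
        f0 y = Unitization.inr ((List.ofFn y).foldl (· * ·) x) := by
      intro y
      rw [aux_inr, List.map_ofFn]
      rfl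
    have hfin : ∀ y : Fin (m+1) → A, f0 y = 0 := by
      intro y
      apply aux_polar
      · intro T
        rw [hf, List.ofFn_const, aux_replicate, h2, mul_zero, Unitization.inr_zero]
      · intro σ
        rw [hf, hf]
        congr 1
        apply aux_perm hG hH
        · exact Equiv.Perm.ofFn_comp_perm σ y
        · simp; omega
    have := hfin (fun i => l.get (i.cast hl.symm))
    rw [hf] at this
    have hl' : List.ofFn (fun i : Fin (m+1) => l.get (i.cast hl.symm)) = l := by
      apply List.ext_getElem
      · rw [List.length_ofFn, hl]
      · intro i h h'
        rw [List.getElem_ofFn]; rfl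
    rw [hl'] at this
    exact Unitization.inr_injective (R := K) (by rw [this, Unitization.inr_zero])
end

section
/- Let K be a field of characteristic zero and let A be an associative (not necessarily unital) K-algebra satisfying x²y = yx² for all x, y ∈ A and x³ = 0 for all x ∈ A. Then every product of four elements of A is zero: x₁x₂x₃x₄ = 0 for all x₁, x₂, x₃, x₄ ∈ A. -/
/-- Let `K` be a field of characteristic zero and `A` an associative (not necessarily
unital) `K`-algebra satisfying `x²y = yx²` and `x³ = 0`. Then every product of four
elements of `A` vanishes. -/
theorem stmt_3 (K : Type*) [Field K] [CharZero K]
    (A : Type*) [NonUnitalRing A] [Module K A] [SMulCommClass K A A] [IsScalarTower K A A]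
    (h1 : ∀ x y : A, x * x * y = y * (x * x))
    (h2 : ∀ x : A, x * x * x = 0) :
    ∀ x₁ x₂ x₃ x₄ : A, x₁ * x₂ * x₃ * x₄ = 0 := by
  have C : ∀ a b c : A, a * b * c + b * a * c - c * a * b - c * b * a = 0 := by
    intro a b c
    have e := h1 (a + b) c
    have e1 := h1 a c
    have e2 := h1 b c
    simp only [mul_add, add_mul, mul_assoc] at e e1 e2 ⊢
    linear_combination (norm := module) e - e1 - e2
  have S : ∀ a b c : A, a * b * c + a * c * b + b * a * c + b * c * a + c * a * b + c * b * a = 0 := by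
    intro a b c
    have e := h2 (a + b + c)
    have e1 := h2 (a + b)
    have e2 := h2 (a + c)
    have e3 := h2 (b + c)
    have f1 := h2 a
    have f2 := h2 b
    have f3 := h2 c
    simp only [mul_add, add_mul, mul_assoc] at e e1 e2 e3 f1 f2 f3 ⊢
    linear_combination (norm := module) e - e1 - e2 - e3 + f1 + f2 + f3
  intro x₁ x₂ x₃ x₄
  have r0 := congrArg (fun z => x₁ * z) (C x₂ x₃ x₄)
  have r1 := C x₂ x₃ (x₁ * x₄)
  have r2 := C x₂ x₄ (x₁ * x₃)
  have r3 := C x₂ (x₃ * x₄) x₁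
  have r4 := C x₃ x₄ (x₂ * x₁)
  have r5 := congrArg (fun z => x₂ * z) (C x₃ x₄ x₁)
  have r6 := congrArg (fun z => x₄ * z) (S x₁ x₂ x₃)
  have r7 := congrArg (fun z => x₄ * z) (C x₂ x₃ x₁)
  have r8 := C (x₂ * x₃) x₄ x₁
  have r9 := C (x₁ * x₄) x₃ x₂
  have r10 := C x₁ (x₄ * x₂) x₃
  have r11 := C (x₁ * x₃) x₂ x₄
  have r12 := congrArg (fun z => z * x₄) (S x₁ x₂ x₃)
  have r13 := S x₂ (x₃ * x₁) x₄
  have r14 := C x₁ (x₄ * x₃) x₂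
  have r15 := C x₁ (x₃ * x₂) x₄
  have r16 := congrArg (fun z => z * x₃) (C x₁ x₄ x₂)
  simp only [mul_add, add_mul, mul_sub, sub_mul, mul_zero, zero_mul, mul_assoc] at r0 r1 r2 r3 r4 r5 r6 r7 r8 r9 r10 r11 r12 r13 r14 r15 r16 ⊢
  linear_combination (norm := module) (1/6 : K) • r0 + (-5/12 : K) • r1 + (1/4 : K) • r2 + (-1/4 : K) • r3 + (-1/2 : K) • r4 + (1/2 : K) • r5 + (1/6 : K) • r6 + (5/12 : K) • r7 + (-1/4 : K) • r8 + (-5/12 : K) • r9 + (-3/4 : K) • r10 + (-1/3 : K) • r11 + (1/3 : K) • r12 + (-1/3 : K) • r13 + (1/6 : K) • r14 + (1/12 : K) • r15 + (1/4 : K) • r16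
end

section
/- Let K be a field of characteristic zero and let A be an associative (not necessarily unital) K-algebra satisfying x²y = yx² for all x, y ∈ A and the standard identity S₃(x,y,z) = xyz + yzx + zxy − yxz − xzy − zyx = 0 for all x, y, z ∈ A. Then x(xy − yx)y = 0 for all x, y ∈ A. -/
/-- Let `K` be a field of characteristic zero and `A` an associative (not necessarily
unital) `K`-algebra satisfying `x²y = yx²` and the standard identity
`S₃(x,y,z) = xyz + yzx + zxy - yxz - xzy - zyx = 0`. Then `x(xy - yx)y = 0`. -/
theorem stmt_4 (K : Type*) [Field K] [CharZero K]
    (A : Type*) [NonUnitalRing A] [Module K A] [SMulCommClass K A A] [IsScalarTower K A A]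
    (h1 : ∀ x y : A, x * x * y = y * (x * x))
    (h2 : ∀ x y z : A,
      x * y * z + y * z * x + z * x * y - y * x * z - x * z * y - z * y * x = 0) :
    ∀ x y : A, x * (x * y - y * x) * y = 0 := by
  intro x y
  have e1 := h1 x y
  have e2 := h1 y x
  have s1 := h2 x y (x * y)
  have s2 := h2 x y (y * x)
  -- all words other than `xyxy`, `yxyx` agree with `xxyy`
  have w1 : y * (x * (x * y)) = x * (x * (y * y)) := by
    have := congrArg (· * y) e1
    simp only [mul_assoc] at this
    exact this.symm
  have w2 : x * (y * (y * x)) = x * (x * (y * y)) := by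
    have := congrArg (x * ·) e2
    simpa only [mul_assoc] using this
  have w3 : y * (y * (x * x)) = x * (x * (y * y)) := by
    have := h1 y (x * x)
    simpa only [mul_assoc] using this
  simp only [mul_assoc] at s1 s2
  rw [w1, w2] at s1
  rw [w1, w2, w3] at s2
  have h3 : (3 : K) • (x * (x * (y * y)) - x * (y * (x * y))) = 0 := by
    have h3' : (3 : K) = 1 + 1 + 1 := by norm_num
    rw [h3', add_smul, add_smul, one_smul]
    generalize x * (x * (y * y)) = a at *
    generalize x * (y * (x * y)) = b at *
    generalize y * (x * (y * x)) = c at *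
    have : a - b + (a - b) + (a - b) = -((b + c + b - a - a - a) + (b + c + b - a - a - a)
      + (a + a + a - c - b - c)) := by abel
    rw [this, s1, s2]; simp
  have h4 := (smul_eq_zero.mp h3).resolve_left (by norm_num)
  simpa only [mul_sub, sub_mul, mul_assoc] using h4
end

section
/- Let A be an associative ring in which all commutators are central, i.e. (xy − yx)z = z(xy − yx) for all x, y, z ∈ A. Then for all x, y, z, t ∈ A one has [x,y][z,t] = −[x,t][z,y], where [u,v] = uv − vu. -/
/-- Let `A` be an associative (not necessarily unital) ring in which all commutators are
central: `(xy - yx)z = z(xy - yx)`. Then `[x,y][z,t] = -[x,t][z,y]` for all `x,y,z,t`. -/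
theorem stmt_5 (A : Type*) [NonUnitalRing A]
    (h : ∀ x y z : A, (x * y - y * x) * z = z * (x * y - y * x)) :
    ∀ x y z t : A,
      (x * y - y * x) * (z * t - t * z) = -((x * t - t * x) * (z * y - y * z)) := by
  intro x y z t
  have h1 := sub_eq_zero.mpr (h (x * z) t y)
  have h2 := congrArg (fun a => x * a) (sub_eq_zero.mpr (h z t y))
  have h3 := congrArg (fun a => a * z) (sub_eq_zero.mpr (h x t y))
  simp only [mul_zero, zero_mul] at h2 h3
  have key : (x * y - y * x) * (z * t - t * z) + (x * t - t * x) * (z * y - y * z)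
      = ((x * z * t - t * (x * z)) * y - y * (x * z * t - t * (x * z)))
        - x * ((z * t - t * z) * y - y * (z * t - t * z))
        - ((x * t - t * x) * y - y * (x * t - t * x)) * z := by
    simp only [mul_sub, sub_mul, mul_assoc]
    abel
  rw [h1, h2, h3] at key
  exact eq_neg_of_add_eq_zero_left (by simpa using key)
end

section
/- Let K be a field of characteristic zero, let k ≥ 1 and m ≥ 1, and let A be an associative (not necessarily unital) K-algebra in which all commutators are central ([[x,y],z] = 0 for all x,y,z) and which satisfies the identity S₊₁(x₁,…,x₊₁)·x₁^m = 0 for all x₁,…,x₊₁ ∈ A, where S_r denotes the standard polynomial of degree r. Then A also satisfies S₊₃(x₁,…,x₊₃)·x₁^(m−1) = 0 for all x₁,…,x₊₃ ∈ A (where x₁⁰ is omitted, i.e. for m = 1 the conclusion is S₊₃(x₁,…,x₊₃) = 0). -/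
/-- The product `x 0 * x 1 * ⋯ * x n` of a nonempty tuple in a (possibly non-unital)
multiplicative structure. -/
def prodTuple {A : Type*} [Mul A] {n : ℕ} (x : Fin (n + 1) → A) : A :=
  (List.ofFn fun i : Fin n => x i.succ).foldl (· * ·) (x 0)

/-- The standard polynomial `S_{n+1}(x 0, …, x n) = Σ_σ sign σ • x (σ 0) * ⋯ * x (σ n)`,
the sum over all permutations of `{0, …, n}`. -/
def stdPoly {A : Type*} [NonUnitalRing A] {n : ℕ} (x : Fin (n + 1) → A) : A :=
  ∑ σ : Equiv.Perm (Fin (n + 1)), (Equiv.Perm.sign σ : ℤ) • prodTuple (x ∘ σ)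


section prelim
open Polynomial
theorem nsmul_cancel (K : Type*) [Field K] [CharZero K] {T : Type*} [AddCommGroup T] [Module K T]
    (n : ℕ) (hn : n ≠ 0) (z : T) (h : n • z = 0) : z = 0 := by
  rw [← Nat.cast_smul_eq_nsmul K] at h
  exact (smul_eq_zero.mp h).resolve_left (Nat.cast_ne_zero.mpr hn)

noncomputable def evK {K T : Type*} [Field K] [Ring T] [Algebra K T] (t : K) : T[X] →+* T :=
  Polynomial.eval₂RingHom' (RingHom.id T) (algebraMap K T t)
    (fun a => (Algebra.commutes t a).symm)

theorem evK_C {K T : Type*} [Field K] [Ring T] [Algebra K T] (t : K) (a : T) :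
    evK t (C a) = a := by
  change eval₂ _ _ (C a) = _
  simp

theorem evK_X {K T : Type*} [Field K] [Ring T] [Algebra K T] (t : K) :
    evK t (X : T[X]) = algebraMap K T t := by
  change eval₂ _ _ X = _
  simp

theorem poly_zero {K T : Type*} [Field K] [CharZero K] [Ring T] [Algebra K T] (Q : T[X])
    (h : ∀ t : K, evK t Q = 0) : Q = 0 := by
  ext d
  rw [coeff_zero, ← Module.forall_dual_apply_eq_zero_iff K]
  intro φ
  set q : K[X] := ∑ i ∈ Finset.range (Q.natDegree + 1), C (φ (Q.coeff i)) * X ^ i with hq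
  have hq0 : q = 0 := by
    apply Polynomial.funext
    intro t
    have := congrArg φ (h t)
    change φ (eval₂ _ _ Q) = _ at this
    rw [eval₂_eq_sum_range, map_sum] at this
    rw [hq, eval_finsetSum, eval_zero, ← map_zero φ, ← this]
    refine Finset.sum_congr rfl fun i _ => ?_
    rw [RingHom.id_apply, ← map_pow, ← Algebra.commutes, ← Algebra.smul_def, map_smul]
    rw [eval_mul, eval_C, eval_pow, eval_X, smul_eq_mul, mul_comm]
  have := congrArg (fun p => coeff p d) hq0
  simp only [hq, finsetSum_coeff, coeff_C_mul, coeff_X_pow, coeff_zero] at this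
  by_cases hd : d < Q.natDegree + 1
  · simpa [hd, Finset.sum_ite_eq] using this
  · rw [coeff_eq_zero_of_natDegree_lt (by omega), map_zero]

/-- first order coefficient of `(x + t c)^m` -/
def dpow {T : Type*} [Ring T] (x c : T) : ℕ → T
  | 0 => 0
  | m + 1 => dpow x c m * x + x ^ m * c

theorem coeff_pow {T : Type*} [Ring T] (x c : T) (m : ℕ) :
    ((C x + C c * X) ^ m).coeff 0 = x ^ m ∧ ((C x + C c * X) ^ m).coeff 1 = dpow x c m := by
  induction m with
  | zero => simp [dpow, coeff_one]
  | succ m ih =>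
    rw [pow_succ, mul_coeff_zero, mul_coeff_one, ih.1, ih.2]
    simp [dpow, pow_succ, add_comm, coeff_X]

/-- first-order extraction -/
theorem first_order {K T : Type*} [Field K] [CharZero K] [Ring T] [Algebra K T]
    (x c a b : T) (m : ℕ)
    (h : ∀ t : K, (a + t • b) * (x + t • c) ^ m = 0) :
    a * dpow x c m + b * x ^ m = 0 := by
  have := poly_zero (K := K) ((C a + C b * X) * (C x + C c * X) ^ m) (by
    intro t
    simp only [map_mul, map_add, map_pow, evK_C, evK_X]
    rw [← Algebra.commutes, ← Algebra.smul_def, ← Algebra.commutes, ← Algebra.smul_def]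
    exact h t)
  have := congrArg (fun p => coeff p 1) this
  simp only [mul_coeff_one, (coeff_pow x c m).1, (coeff_pow x c m).2] at this
  simpa using this

theorem dpow_central {T : Type*} [Ring T] (x c : T) (h : Commute x c) (m : ℕ) :
    dpow x c (m+1) = (m + 1) • (x ^ m * c) := by
  induction m with
  | zero => simp [dpow]
  | succ m ih =>
    rw [dpow, ih, succ_nsmul (x ^ (m+1) * c), smul_mul_assoc, mul_assoc, ← h.eq, ← mul_assoc, ← pow_succ]

theorem sq_pow {T : Type*} [Ring T] (w u : T) (huu : u * u = 0) (h : Commute w u) (n : ℕ) :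
    (w + u) ^ (n + 1) = w ^ (n + 1) + (n + 1) • (u * w ^ n) := by
  induction n with
  | zero => simp
  | succ n ih =>
    rw [pow_succ (w + u), ih, mul_add, add_mul, add_mul, smul_mul_assoc, smul_mul_assoc]
    have h1 : u * w ^ n * u = 0 := by
      rw [mul_assoc, (h.pow_left n).eq, ← mul_assoc, huu, zero_mul]
    rw [h1, (h.pow_left (n+1)).eq, mul_assoc u, ← pow_succ, ← pow_succ, succ_nsmul _ (n+1)]
    simp; abel

section
variable {T : Type*} [Ring T] (x ξ e δ : T)
theorem X_even (h1 : e * ξ = -(ξ * e)) (h2 : e * e = 0) (h3 : e * x = x * e)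
    (hd : δ = x * ξ - ξ * x) (hed : e * δ = - (δ * e)) (hdξ : δ * ξ = -(ξ * δ)) (n : ℕ) :
    (e * x + ξ) ^ (2 * (n + 1)) = (ξ * ξ) ^ (n + 1) + (n + 1) • (e * δ * (ξ * ξ) ^ n) := by
  have h0 : (e * x + ξ) ^ 2 = ξ * ξ + e * δ := by
    have a1 : e * x * (e * x) = 0 := by
      rw [← mul_assoc, mul_assoc e x e, ← h3, ← mul_assoc, h2]; simp
    have a2 : ξ * (e * x) = - (e * (ξ * x)) := by
      rw [← mul_assoc, ← mul_assoc, h1]; simp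
    rw [sq, add_mul, mul_add, mul_add, a1, a2, hd, mul_sub, mul_assoc]; abel
  rw [pow_mul, h0]
  apply sq_pow
  · rw [mul_assoc, ← mul_assoc δ, ← neg_eq_iff_eq_neg.mpr hed]
    simp [← mul_assoc, h2]
  · have c1 : Commute (ξ * ξ) e := by
      show ξ * ξ * e = e * (ξ * ξ)
      rw [← mul_assoc e, h1, mul_assoc, neg_mul, mul_assoc ξ e, h1]; simp
    have c2 : Commute (ξ * ξ) δ := by
      show ξ * ξ * δ = δ * (ξ * ξ)
      rw [← mul_assoc δ, hdξ, mul_assoc, neg_mul, mul_assoc ξ δ, hdξ]; simp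
    exact c1.mul_right c2

theorem X_odd (h1 : e * ξ = -(ξ * e)) (h2 : e * e = 0) (h3 : e * x = x * e)
    (hd : δ = x * ξ - ξ * x) (hed : e * δ = - (δ * e)) (hdξ : δ * ξ = -(ξ * δ)) (n : ℕ) :
    (e * x + ξ) ^ (2 * (n + 1) + 1) = ξ ^ (2 * (n+1) + 1) +
      e * (x * (ξ * ξ) ^ (n + 1) - (n + 1) • (ξ * δ * (ξ * ξ) ^ n)) := by
  rw [pow_succ', X_even x ξ e δ h1 h2 h3 hd hed hdξ]
  have a1 : e * x * (e * δ * (ξ * ξ) ^ n) = 0 := by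
    rw [h3, mul_assoc, ← mul_assoc e, ← mul_assoc e, h2]; simp
  have a2 : ξ * (e * δ * (ξ * ξ) ^ n) = - (e * (ξ * δ * (ξ * ξ) ^ n)) := by
    rw [← mul_assoc, ← mul_assoc, ← mul_assoc, ← mul_assoc, h1]; simp
  rw [add_mul, mul_add, mul_add, mul_smul_comm, mul_smul_comm, a1, a2, mul_sub, mul_smul_comm,
    ← sq, ← pow_mul, ← pow_succ' ξ, mul_assoc e x]
  simp; abel
end

end prelim


section core
set_option linter.unusedSectionVars false
variable {K : Type*} [Field K] [CharZero K] {A : Type*} [NonUnitalRing A] [Module K A]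
  {T : Type*} [Ring T] [Algebra K T] {N : ℕ}

def XX (j : A →ₗ[K] T) (e : Fin N → T) (y : Fin N → A) : T := ∑ i, e i * j (y i)

theorem XX_anti (j : A →ₗ[K] T) (e : Fin N → T)
    (he : ∀ i k, e i * e k = -(e k * e i)) (hc : ∀ i a, Commute (e i) (j a))
    (u v : Fin N → A) (hu : ∀ i z, Commute (j (u i)) (j z)) :
    XX j e u * XX j e v = -(XX j e v * XX j e u) := by
  unfold XX
  rw [Finset.sum_mul_sum, Finset.sum_mul_sum, Finset.sum_comm, ← Finset.sum_neg_distrib]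
  refine Finset.sum_congr rfl fun i _ => ?_
  rw [← Finset.sum_neg_distrib]
  refine Finset.sum_congr rfl fun k _ => ?_
  rw [mul_assoc (e k), ← mul_assoc (j (u k)), ← (hc i _).eq, mul_assoc, ← mul_assoc, he,
    (hu k _).eq, mul_assoc (e i), ← mul_assoc (j (v i)), ← (hc k _).eq]
  simp only [mul_assoc, neg_mul]

theorem XX_delta (j : A →ₗ[K] T) (hj : ∀ a b, j (a * b) = j a * j b) (e : Fin N → T)
    (hc : ∀ i a, Commute (e i) (j a)) (x : A) (y : Fin N → A) :
    j x * XX j e y - XX j e y * j x = XX j e (fun i => x * y i - y i * x) := by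
  unfold XX
  rw [Finset.mul_sum, Finset.sum_mul, ← Finset.sum_sub_distrib]
  refine Finset.sum_congr rfl fun i _ => ?_
  rw [map_sub, hj, hj, mul_sub, ← mul_assoc, ← (hc i x).eq, mul_assoc, mul_assoc]

theorem XX_sq (j : A →ₗ[K] T) (hj : ∀ a b, j (a * b) = j a * j b) (e : Fin N → T)
    (he : ∀ i k, e i * e k = -(e k * e i))
    (hc : ∀ i a, Commute (e i) (j a)) (y : Fin N → A) :
    2 • (XX j e y * XX j e y) = ∑ i, ∑ k, j (y i * y k - y k * y i) * (e i * e k) := by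
  have h1 : XX j e y * XX j e y = ∑ i, ∑ k, j (y i * y k) * (e i * e k) := by
    unfold XX
    rw [Finset.sum_mul_sum]
    refine Finset.sum_congr rfl fun i _ => Finset.sum_congr rfl fun k _ => ?_
    rw [(hc i _).eq, mul_assoc, ← mul_assoc (e i), ((hc i _).mul_left (hc k _)).eq, hj, mul_assoc]
  have h2 : XX j e y * XX j e y = -∑ i, ∑ k, j (y k * y i) * (e i * e k) := by
    rw [h1, Finset.sum_comm, ← Finset.sum_neg_distrib]
    refine Finset.sum_congr rfl fun i _ => ?_
    rw [← Finset.sum_neg_distrib]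
    refine Finset.sum_congr rfl fun k _ => ?_
    rw [he, mul_neg]
  rw [two_nsmul]
  nth_rw 1 [h1]
  rw [h2, ← sub_eq_add_neg, ← Finset.sum_sub_distrib]
  refine Finset.sum_congr rfl fun i _ => ?_
  rw [← Finset.sum_sub_distrib]
  refine Finset.sum_congr rfl fun k _ => ?_
  rw [map_sub, sub_mul]

/-- if `Z` kills all commutators, it kills `ξ ^ 2`. -/
theorem kill_w (j : A →ₗ[K] T) (hj : ∀ a b, j (a * b) = j a * j b) (e : Fin N → T)
    (he : ∀ i k, e i * e k = -(e k * e i))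
    (hc : ∀ i a, Commute (e i) (j a)) (y : Fin N → A) (Z : T)
    (hZ : ∀ a b, Z * j (a * b - b * a) = 0) : Z * (XX j e y * XX j e y) = 0 := by
  apply nsmul_cancel K 2 two_ne_zero
  rw [← mul_smul_comm, XX_sq j hj e he hc, Finset.mul_sum]
  refine Finset.sum_eq_zero fun i _ => ?_
  rw [Finset.mul_sum]
  refine Finset.sum_eq_zero fun k _ => ?_
  rw [← mul_assoc, hZ, zero_mul]

theorem core_even (j : A →ₗ[K] T) (hj : ∀ a b, j (a * b) = j a * j b) (e : Fin N → T)
    (he : ∀ i k, e i * e k = -(e k * e i))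
    (hc : ∀ i a, Commute (e i) (j a)) (y : Fin N → A)
    (hcomm : ∀ x y z : A, Commute (j (x * y - y * x)) (j z))
    (e0 : T) (n m : ℕ)
    (H : ∀ x : A, e0 * (j x * XX j e y - XX j e y * j x) * (XX j e y * XX j e y) ^ n
       * j x ^ (m+1) = 0) (x : A) :
    e0 * (j x * XX j e y - XX j e y * j x) * (XX j e y * XX j e y) ^ (n+1) * j x ^ m = 0 := by
  set ξ := XX j e y with hξ
  have hwx : ∀ x : A, Commute (ξ * ξ) (j x) := by
    intro x
    have h1 := XX_anti j e he hc (fun i => x * y i - y i * x) y (fun i z => hcomm _ _ _)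
    rw [← XX_delta j hj e hc, ← hξ] at h1
    show ξ * ξ * j x = j x * (ξ * ξ)
    rw [sub_mul, mul_sub, ← mul_assoc, ← mul_assoc] at h1
    rw [← mul_assoc, ← sub_eq_zero]
    have : j x * ξ * ξ - ξ * ξ * j x = (j x * ξ * ξ - ξ * j x * ξ) + (ξ * j x * ξ - ξ * ξ * j x) := by
      abel
    rw [← neg_eq_zero, neg_sub, this, h1]; abel
  have key : ∀ a b, (e0 * (j x * ξ - ξ * j x) * (ξ * ξ) ^ n * j x ^ m) * j (a * b - b * a) = 0 := by
    intro a b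
    set c := a * b - b * a
    have hcξ : j c * ξ - ξ * j c = 0 := by
      rw [hξ, XX_delta j hj e hc]
      unfold XX
      refine Finset.sum_eq_zero fun i _ => ?_
      rw [map_sub, hj, hj, (hcomm a b (y i)).eq, sub_self, mul_zero]
    have := first_order (K := K) (j x) (j c) (e0 * (j x * ξ - ξ * j x) * (ξ * ξ) ^ n) 0 (m+1) (by
      intro t
      have := H (x + t • c)
      rw [map_add, map_smul] at this
      rw [smul_zero, add_zero, ← this]
      congr 3
      have : (j x + t • j c) * ξ - ξ * (j x + t • j c) =
        (j x * ξ - ξ * j x) + t • (j c * ξ - ξ * j c) := by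
        rw [add_mul, mul_add, smul_mul_assoc, mul_smul_comm, smul_sub]; abel
      rw [this, hcξ, smul_zero, add_zero])
    rw [zero_mul, add_zero, dpow_central _ _ (hcomm a b x).symm, mul_smul_comm] at this
    rw [mul_assoc _ (j x ^ m)]
    exact nsmul_cancel K _ (Nat.succ_ne_zero m) _ this
  have := kill_w j hj e he hc y _ key
  rw [← hξ, mul_assoc _ (j x ^ m), ← ((hwx x).pow_right m).eq, ← mul_assoc, mul_assoc _ _ (ξ * ξ), ← pow_succ] at this
  exact this


/-- Commutator computation, step (B). -/
theorem stepB (F : Type*) [Field F] [CharZero F] [Algebra F T] (x ξ e0 δ w : T) (h0 : e0 * ξ = -(ξ * e0)) (hw : w = ξ * ξ)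
    (hd : δ = x * ξ - ξ * x) (hdx : Commute δ x) (hdξ : δ * ξ = -(ξ * δ)) (hdd : δ * δ = 0)
    (hwx : Commute w x) (n m : ℕ)
    (H : e0 * (x * w ^ (n+1) - (n+1) • (ξ * δ * w ^ n)) * x ^ (m+1) = 0) :
    e0 * δ * w ^ (n+1) * x ^ (m+1) = 0 := by
  have hwξ : Commute w ξ := by rw [hw]; exact (Commute.refl ξ).mul_left (Commute.refl ξ)
  have hwd : Commute w δ := by rw [hd]; exact (hwx.mul_right hwξ).sub_right (hwξ.mul_right hwx)
  have hxp : ∀ m : ℕ, x ^ (m+1) * ξ = ξ * x ^ (m+1) + (m+1) • (δ * x ^ m) := by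
    intro m
    induction m with
    | zero => simp [hd]
    | succ m ih =>
      have : x * ξ = ξ * x + δ := by rw [hd]; abel
      rw [pow_succ', mul_assoc, ih, mul_add, ← mul_assoc, this, mul_smul_comm, ← mul_assoc,
        ← hdx.eq, mul_assoc δ, ← pow_succ', add_mul, mul_assoc ξ, succ_nsmul _ (m+1), ← pow_succ']
      abel
  set L := x * w ^ (n+1) - (n+1) • (ξ * δ * w ^ n) with hL
  have hLδ : L * δ = δ * w ^ (n+1) * x := by
    rw [hL, sub_mul, smul_mul_assoc, mul_assoc (ξ * δ), (hwd.pow_left n).eq, mul_assoc ξ,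
      ← mul_assoc δ, hdd, mul_assoc x, (hwd.pow_left _).eq, ← mul_assoc, ← hdx.eq, mul_assoc,
      mul_assoc, ((hwx.pow_left _).eq)]
    simp
  have hLξ : L * ξ = ξ * L + (2*n+3) • (δ * w ^ (n+1)) := by
    have hx : x * ξ = ξ * x + δ := by rw [hd]; abel
    have a1 : ξ * δ * w ^ n * ξ = - (δ * w ^ (n+1)) := by
      rw [mul_assoc (ξ * δ), (hwξ.pow_left n).eq, mul_assoc, ← mul_assoc δ, hdξ, neg_mul, mul_neg,
        ← mul_assoc, ← mul_assoc, ← hw, hwd.eq, mul_assoc, ← pow_succ']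
    have a2 : ξ * (ξ * δ * w ^ n) = δ * w ^ (n+1) := by
      rw [← mul_assoc, ← mul_assoc, ← hw, hwd.eq, mul_assoc, ← pow_succ']
    rw [hL, sub_mul, mul_sub, smul_mul_assoc, mul_smul_comm, a1, a2, mul_assoc x,
      (hwξ.pow_left _).eq, ← mul_assoc, hx, add_mul, mul_assoc ξ]
    module
  have E1 : e0 * L * x ^ (m+1) * ξ = 0 := by rw [H, zero_mul]
  have E2 : e0 * (ξ * L * x ^ (m+1)) = 0 := by
    rw [← mul_assoc, ← mul_assoc, h0, neg_mul, neg_mul, mul_assoc ξ, mul_assoc ξ, H]; simp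
  have E3 : e0 * L * x ^ (m+1) * ξ = e0 * (ξ * L * x ^ (m+1)) +
      (2*n+3 + (m+1)) • (e0 * δ * w ^ (n+1) * x ^ (m+1)) := by
    rw [mul_assoc, hxp, mul_add, mul_assoc e0, ← mul_assoc L, hLξ, mul_smul_comm, mul_assoc e0,
      ← mul_assoc L, hLδ, mul_assoc _ x, ← pow_succ', add_mul, mul_add, add_nsmul _ (2*n+3) (m+1),
      smul_mul_assoc, mul_smul_comm]
    simp only [mul_assoc, add_assoc]
  rw [E1, E2, zero_add] at E3
  exact nsmul_cancel F _ (by omega) _ E3.symm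

theorem core_odd (j : A →ₗ[K] T) (hj : ∀ a b, j (a * b) = j a * j b) (e : Fin N → T)
    (he : ∀ i k, e i * e k = -(e k * e i))
    (hc : ∀ i a, Commute (e i) (j a)) (y : Fin N → A)
    (hcomm : ∀ x y z : A, Commute (j (x * y - y * x)) (j z))
    (e0 : T) (he0 : ∀ i, e i * e0 = -(e0 * e i)) (hc0 : ∀ a, Commute e0 (j a)) (n m : ℕ)
    (H : ∀ x : A, e0 * (j x * (XX j e y * XX j e y) ^ (n+1) - (n+1) •
      (XX j e y * (j x * XX j e y - XX j e y * j x) * (XX j e y * XX j e y) ^ n))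
       * j x ^ (m+1) = 0) (x : A) :
    e0 * (j x * (XX j e y * XX j e y) ^ (n+2) - (n+2) •
      (XX j e y * (j x * XX j e y - XX j e y * j x) * (XX j e y * XX j e y) ^ (n+1)))
       * j x ^ m = 0 := by
  set ξ := XX j e y with hξ
  have h0 : e0 * ξ = -(ξ * e0) := by
    rw [hξ]; unfold XX
    rw [Finset.mul_sum, Finset.sum_mul, ← Finset.sum_neg_distrib]
    refine Finset.sum_congr rfl fun i _ => ?_
    rw [mul_assoc, ← (hc0 _).eq, ← mul_assoc, ← mul_assoc, he0]; simp
  have hdξ : ∀ x : A, (j x * ξ - ξ * j x) * ξ = -(ξ * (j x * ξ - ξ * j x)) := by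
    intro x
    have h1 := XX_anti j e he hc (fun i => x * y i - y i * x) y (fun i z => hcomm _ _ _)
    rwa [← XX_delta j hj e hc, ← hξ] at h1
  have hdd : ∀ x : A, (j x * ξ - ξ * j x) * (j x * ξ - ξ * j x) = 0 := by
    intro x
    have h1 := XX_anti j e he hc (fun i => x * y i - y i * x) (fun i => x * y i - y i * x)
      (fun i z => hcomm _ _ _)
    rw [← XX_delta j hj e hc, ← hξ] at h1
    apply nsmul_cancel K 2 two_ne_zero
    rw [two_nsmul]
    nth_rw 1 [h1]
    simp
  have hdx : ∀ x z : A, Commute (j x * ξ - ξ * j x) (j z) := by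
    intro x z
    rw [hξ, XX_delta j hj e hc]
    unfold XX
    exact Commute.sum_left _ _ _ fun i _ => (hc i z).mul_left (hcomm _ _ _)
  have hwx : ∀ x : A, Commute (ξ * ξ) (j x) := by
    intro x
    have h1 := hdξ x
    show ξ * ξ * j x = j x * (ξ * ξ)
    rw [sub_mul, mul_sub, ← mul_assoc, ← mul_assoc] at h1
    rw [← mul_assoc, ← sub_eq_zero]
    have : j x * ξ * ξ - ξ * ξ * j x = (j x * ξ * ξ - ξ * j x * ξ) + (ξ * j x * ξ - ξ * ξ * j x) := by
      abel
    rw [← neg_eq_zero, neg_sub, this, h1]; abel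
  have hB : ∀ x : A, e0 * (j x * ξ - ξ * j x) * (ξ * ξ) ^ (n+1) * j x ^ (m+1) = 0 := fun x =>
    stepB K (j x) ξ e0 _ _ h0 rfl rfl (hdx x x) (hdξ x) (hdd x) (hwx x) n m (H x)
  have hlin : ∀ (c : A) (t : K), j (x + t • c) * ξ - ξ * j (x + t • c) =
        (j x * ξ - ξ * j x) + t • (j c * ξ - ξ * j c) := by
    intro c t
    rw [map_add, map_smul, add_mul, mul_add, smul_mul_assoc, mul_smul_comm, smul_sub]; abel
  set w := ξ * ξ with hw
  have hwξ : Commute w ξ := by rw [hw]; exact (Commute.refl ξ).mul_left (Commute.refl ξ)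
  set δ := j x * ξ - ξ * j x with hδ
  have hwd : Commute w δ := by
    exact ((hwx x).mul_right hwξ).sub_right (hwξ.mul_right (hwx x))
  -- step (A)
  have keyA : ∀ a b, ((m+1) • (e0 * (j x * w ^ (n+1) - (n+1) • (ξ * δ * w ^ n)) * j x ^ m)
      + e0 * w ^ (n+1) * j x ^ (m+1)) * j (a * b - b * a) = 0 := by
    intro a b
    set c := a * b - b * a
    have hcξ : j c * ξ - ξ * j c = 0 := by
      rw [hξ, XX_delta j hj e hc]
      unfold XX
      refine Finset.sum_eq_zero fun i _ => ?_
      rw [map_sub, hj, hj, (hcomm a b (y i)).eq, sub_self, mul_zero]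
    have := first_order (K := K) (j x) (j c) (e0 * (j x * w ^ (n+1) - (n+1) • (ξ * δ * w ^ n)))
      (e0 * (j c * w ^ (n+1))) (m+1) (by
      intro t
      have := H (x + t • c)
      rw [hlin, hcξ, smul_zero, add_zero, map_add, map_smul] at this
      rw [← this]
      congr 1
      rw [← mul_smul_comm t e0, ← mul_add, add_mul, smul_mul_assoc]
      congr 1
      abel)
    rw [dpow_central _ _ (hcomm a b x).symm, mul_smul_comm] at this
    rw [add_mul, smul_mul_assoc, mul_assoc _ (j x ^ m), ← this]
    congr 1
    rw [mul_assoc _ _ (j c), ← ((hcomm a b x).pow_right _).eq, mul_assoc e0 (w ^ (n+1)), ← mul_assoc _ (j c),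
       ((hwx c).pow_left _).eq, ← mul_assoc e0]
  have hA := kill_w j hj e he hc y _ keyA
  rw [← hξ, ← hw, add_mul, smul_mul_assoc, mul_sub, sub_mul, sub_mul, mul_smul_comm,
    smul_mul_assoc, smul_mul_assoc] at hA
  have r1 : e0 * (j x * w ^ (n+1)) * j x ^ m * w = e0 * w ^ (n+2) * j x ^ (m+1) := by
    rw [mul_assoc _ _ w, ← ((hwx x).pow_right _).eq, ← ((hwx x).pow_left _).eq, pow_succ w (n+1), pow_succ' (j x)]
    simp only [mul_assoc]
    rw [← mul_assoc (j x) w, ← (hwx x).eq]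
    simp only [mul_assoc]
  have r2 : e0 * (ξ * δ * w ^ n) * j x ^ m * w = e0 * (ξ * δ * w ^ (n+1)) * j x ^ m := by
    rw [mul_assoc _ _ w, ← ((hwx x).pow_right _).eq, pow_succ w n]
    simp only [mul_assoc]
  have r3 : e0 * w ^ (n+1) * j x ^ (m+1) * w = e0 * w ^ (n+2) * j x ^ (m+1) := by
    rw [mul_assoc _ _ w, ← ((hwx x).pow_right _).eq, pow_succ w (n+1)]
    simp only [mul_assoc]
  rw [r1, r2, r3] at hA
  -- step (C)
  have keyC : ∀ i, e0 * (δ * w ^ (n+1) * (e i * dpow (j x) (j (y i)) (m+1))) =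
      e0 * (e i * (j (y i) * ξ - ξ * j (y i)) * (w ^ (n+1) * j x ^ (m+1))) := by
    intro i
    set c := y i
    have := first_order (K := K) (j x) (j c) (e0 * δ * w ^ (n+1))
      (e0 * (j c * ξ - ξ * j c) * w ^ (n+1)) (m+1) (by
      intro t
      have := hB (x + t • c)
      rw [hlin, map_add, map_smul] at this
      rw [← this]
      congr 1
      rw [← smul_mul_assoc, ← add_mul, mul_add, mul_smul_comm])
    have hid : e i * δ = -(δ * e i) := by
      rw [hδ]
      have hi : e i * ξ = - (ξ * e i) := by
        rw [hξ]; unfold XX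
        rw [Finset.mul_sum, Finset.sum_mul, ← Finset.sum_neg_distrib]
        refine Finset.sum_congr rfl fun k _ => ?_
        rw [mul_assoc, ← (hc i _).eq, ← mul_assoc, ← mul_assoc, he]; simp
      rw [mul_sub, sub_mul, ← mul_assoc, (hc i x).eq, mul_assoc, hi, ← mul_assoc (e i), hi,
        mul_assoc ξ (j x), ← (hc i x).eq]
      simp only [mul_neg, neg_mul, mul_assoc]
      abel
    have hiw : Commute (e i) w := by
      have hi : e i * ξ = - (ξ * e i) := by
        rw [hξ]; unfold XX
        rw [Finset.mul_sum, Finset.sum_mul, ← Finset.sum_neg_distrib]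
        refine Finset.sum_congr rfl fun k _ => ?_
        rw [mul_assoc, ← (hc i _).eq, ← mul_assoc, ← mul_assoc, he]; simp
      show e i * (ξ * ξ) = ξ * ξ * e i
      rw [← mul_assoc, hi, neg_mul, mul_assoc, hi]; simp [mul_assoc]
    have h2 := congrArg (fun z => e i * z) this
    simp only [mul_add, mul_zero] at h2
    have q1 : e i * (e0 * δ * w ^ (n+1) * dpow (j x) (j c) (m+1)) =
       e0 * (δ * w ^ (n+1) * (e i * dpow (j x) (j c) (m+1))) := by
      simp only [← mul_assoc]
      rw [he0, neg_mul, mul_assoc e0, hid]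
      simp only [mul_neg, neg_mul, neg_neg, mul_assoc]
      rw [← mul_assoc (e i), (hiw.pow_right _).eq]
      simp only [mul_assoc]
    have q2 : e i * (e0 * (j c * ξ - ξ * j c) * w ^ (n+1) * j x ^ (m+1)) =
       - (e0 * (e i * (j c * ξ - ξ * j c) * (w ^ (n+1) * j x ^ (m+1)))) := by
      simp only [← mul_assoc]
      rw [he0]
      simp only [neg_mul]
    rw [q1, q2, ← sub_eq_add_neg, sub_eq_zero] at h2
    exact h2
  have hsum : ∀ m : ℕ, δ * ∑ i, e i * dpow (j x) (j (y i)) (m+1) = (m+1) • (δ * ξ * j x ^ m) := by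
    have hδx : ∀ m : ℕ, δ * (j x ^ m * ξ) = δ * ξ * j x ^ m := by
      intro m
      induction m with
      | zero => simp
      | succ m ih =>
        have hx : j x * ξ = ξ * j x + δ := by rw [hδ]; abel
        rw [pow_succ, mul_assoc, hx, mul_add, mul_add, ← ((hdx x x).pow_right m).eq, ← mul_assoc δ δ,
          hdd x, zero_mul, add_zero, ← mul_assoc, ← mul_assoc, mul_assoc δ, ih, mul_assoc, mul_assoc]
    have hrec : ∀ m : ℕ, ∑ i, e i * dpow (j x) (j (y i)) (m+1) =
        (∑ i, e i * dpow (j x) (j (y i)) m) * j x + j x ^ m * ξ := by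
      intro m
      rw [hξ]; unfold XX
      rw [Finset.sum_mul, Finset.mul_sum, ← Finset.sum_add_distrib]
      refine Finset.sum_congr rfl fun i _ => ?_
      rw [dpow, mul_add, ← mul_assoc, ← mul_assoc, ((hc i x).pow_right m).eq, mul_assoc (j x ^ m)]
    intro m
    induction m with
    | zero => rw [hrec]; simp [dpow]
    | succ m ih =>
      rw [hrec, mul_add, ← mul_assoc, ih, hδx, smul_mul_assoc, mul_assoc _ _ (j x), ← pow_succ,
        succ_nsmul _ (m+1)]
  have hsum2 : ∑ i, e i * (j (y i) * ξ - ξ * j (y i)) = 2 • w := by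
    have : ∀ i, e i * (j (y i) * ξ - ξ * j (y i)) = (e i * j (y i)) * ξ + ξ * (e i * j (y i)) := by
      intro i
      have hi : e i * ξ = - (ξ * e i) := by
        rw [hξ]; unfold XX
        rw [Finset.mul_sum, Finset.sum_mul, ← Finset.sum_neg_distrib]
        refine Finset.sum_congr rfl fun k _ => ?_
        rw [mul_assoc, ← (hc i _).eq, ← mul_assoc, ← mul_assoc, he]; simp
      rw [mul_sub, ← mul_assoc, ← mul_assoc, ← mul_assoc, hi]; simp
    rw [Finset.sum_congr rfl fun i _ => this i, Finset.sum_add_distrib, ← Finset.sum_mul,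
      ← Finset.mul_sum, two_nsmul]
    rfl
  have hC := Finset.sum_congr (rfl : Finset.univ = Finset.univ) fun i _ => keyC i
  rw [← Finset.mul_sum, ← Finset.mul_sum, ← Finset.mul_sum, ← Finset.sum_mul, hsum2,
    ← (hwd.pow_left _).eq, mul_assoc (w ^ (n+1)), hsum] at hC
  have r4 : e0 * (w ^ (n+1) * ((m+1) • (δ * ξ * j x ^ m))) =
      - ((m+1) • (e0 * (ξ * δ * w ^ (n+1)) * j x ^ m)) := by
    rw [mul_smul_comm, mul_smul_comm, ← smul_neg, (hdξ x : δ * ξ = -(ξ * δ))]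
    congr 1
    rw [mul_assoc ξ δ, ← (hwd.pow_left _).eq, ← mul_assoc ξ, ← (hwξ.pow_left _).eq]
    simp only [mul_assoc, neg_mul, mul_neg]
    rfl
  have r5 : e0 * (2 • w * (w ^ (n+1) * j x ^ (m+1))) = 2 • (e0 * w ^ (n+2) * j x ^ (m+1)) := by
    rw [smul_mul_assoc, mul_smul_comm, pow_succ' w (n+1)]
    simp only [mul_assoc]
  rw [r4, r5] at hC
  rw [mul_sub, sub_mul, mul_smul_comm, smul_mul_assoc]
  have r6 : e0 * (j x * w ^ (n+2)) * j x ^ m = e0 * w ^ (n+2) * j x ^ (m+1) := by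
    rw [← ((hwx x).pow_left _).eq, pow_succ' (j x)]
    simp only [mul_assoc]
  rw [r6]
  set P := e0 * w ^ (n+2) * j x ^ (m+1)
  set R := e0 * (ξ * δ * w ^ (n+1)) * j x ^ m
  have hP : P = 0 := by
    apply nsmul_cancel K (m + 2 * n + 4) (by omega)
    have h5 : (m + 2 * n + 4) • P = ((m+1) • (P - (n+1) • R) + P) + (n+1) • (2 • P - -((m+1) • R)) := by
      simp only [← natCast_zsmul, smul_sub, smul_neg, smul_smul]
      push_cast
      module
    rw [h5, hA, hC]; simp
  have hR : R = 0 := by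
    apply nsmul_cancel K (m + 1) (by omega)
    rw [hP] at hC
    simpa using hC
  rw [hP, hR]; simp
end core


section transfer
set_option linter.unusedSectionVars false
variable {K : Type*} [Field K] [CharZero K] {A : Type*} [NonUnitalRing A] [Module K A]
  {T : Type*} [Ring T] [Algebra K T] {N : ℕ}

theorem j_prodTuple (j : A →ₗ[K] T) (hj : ∀ a b, j (a * b) = j a * j b) {n : ℕ}
    (x : Fin (n + 1) → A) : j (prodTuple x) = (List.ofFn fun i => j (x i)).prod := by
  have h : ∀ (l : List A) (a : A), j (l.foldl (· * ·) a) = j a * (l.map j).prod := by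
    intro l
    induction l with
    | nil => simp
    | cons b l ih => intro a; simp [ih, hj, mul_assoc]
  rw [prodTuple, h, List.ofFn_succ, List.prod_cons, List.map_ofFn]
  rfl

theorem j_powSucc (j : A →ₗ[K] T) (hj : ∀ a b, j (a * b) = j a * j b) (n : ℕ)
    (x : A) : j (powSucc x n) = j x ^ (n + 1) := by
  induction n with
  | zero => simp [powSucc]
  | succ n ih => rw [powSucc, hj, ih, ← pow_succ]

def eP (e : Fin N → T) {r : ℕ} (f : Fin r → Fin N) : T := (List.ofFn fun i => e (f i)).prod

theorem stdPoly_perm {n : ℕ} (x : Fin (n + 1) → A) (τ : Equiv.Perm (Fin (n+1))) :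
    stdPoly (x ∘ τ) = (Equiv.Perm.sign τ : ℤ) • stdPoly x := by
  unfold stdPoly
  rw [Finset.smul_sum]
  refine Fintype.sum_equiv (Equiv.mulLeft τ) _ _ fun σ => ?_
  simp only [Equiv.coe_mulLeft, Equiv.Perm.sign_mul, smul_smul, Function.comp_assoc]
  rw [Units.val_mul, ← mul_assoc, ← Units.val_mul, Int.units_mul_self]
  simp [Equiv.Perm.coe_mul]

theorem split_prod (j : A →ₗ[K] T) (e : Fin N → T) (hc : ∀ i a, Commute (e i) (j a))
    {r : ℕ} (f : Fin r → Fin N) (y : Fin r → A) :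
    (List.ofFn fun i => e (f i) * j (y i)).prod = (List.ofFn fun i => j (y i)).prod * eP e f := by
  unfold eP
  induction r with
  | zero => simp
  | succ r ih =>
    have hcm : Commute (e (f 0)) (List.ofFn fun i : Fin r => j (y i.succ)).prod := by
      apply Commute.list_prod_right
      intro z hz
      obtain ⟨i, rfl⟩ := (List.mem_ofFn' _ _).mp hz
      exact hc _ _
    rw [List.ofFn_succ, List.prod_cons, ih (fun i => f i.succ) (fun i => y i.succ),
      List.ofFn_succ, List.prod_cons, List.ofFn_succ, List.prod_cons, (hc _ _).eq]
    simp only [mul_assoc]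
    rw [← mul_assoc (e (f 0)), hcm.eq, mul_assoc]

theorem XX_pow (j : A →ₗ[K] T) (e : Fin N → T) (hc : ∀ i a, Commute (e i) (j a))
    (r : ℕ) (y : Fin N → A) :
    XX j e y ^ r = ∑ f : Fin r → Fin N, (List.ofFn fun i => j (y (f i))).prod * eP e f := by
  have h := (MultilinearMap.mkPiAlgebraFin K r T).map_sum (fun (_ : Fin r) i => e i * j (y i))
  have h2 := MultilinearMap.mkPiAlgebraFin_apply_const (R := K) (n := r) (XX j e y)
  rw [← h2]
  unfold XX
  rw [h]
  refine Finset.sum_congr rfl fun f _ => ?_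
  rw [MultilinearMap.mkPiAlgebraFin_apply]
  exact split_prod j e hc f (fun i => y (f i))

theorem j_std (j : A →ₗ[K] T) (hj : ∀ a b, j (a * b) = j a * j b) {n : ℕ}
    (x : Fin (n + 1) → A) : j (stdPoly x) =
      ∑ σ : Equiv.Perm (Fin (n+1)), (Equiv.Perm.sign σ : ℤ) • (List.ofFn fun i => j (x (σ i))).prod := by
  unfold stdPoly
  rw [map_sum]
  refine Finset.sum_congr rfl fun σ _ => ?_
  rw [map_zsmul, j_prodTuple j hj]
  rfl

theorem XX_pow_std (j : A →ₗ[K] T) (hj : ∀ a b, j (a * b) = j a * j b) (e : Fin N → T)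
    (hc : ∀ i a, Commute (e i) (j a))
    (hperm : ∀ (r : ℕ) (f : Fin r → Fin N) (σ : Equiv.Perm (Fin r)),
      eP e (f ∘ σ) = (Equiv.Perm.sign σ : ℤ) • eP e f)
    (r : ℕ) (y : Fin N → A) :
    (r+1).factorial • XX j e y ^ (r+1) =
      ∑ f : Fin (r+1) → Fin N, j (stdPoly (y ∘ f)) * eP e f := by
  have h1 : ∀ σ : Equiv.Perm (Fin (r+1)), XX j e y ^ (r+1) = ∑ f : Fin (r+1) → Fin N,
     ((Equiv.Perm.sign σ : ℤ) • (List.ofFn fun i => j (y (f (σ i)))).prod) * eP e f := by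
    intro σ
    rw [XX_pow j e hc]
    refine Fintype.sum_equiv (Equiv.arrowCongr σ (Equiv.refl _)) _ _ fun f => ?_
    have : f = (Equiv.arrowCongr σ (Equiv.refl _)) f ∘ σ := by
      ext i; simp
    have h2 := hperm _ ((Equiv.arrowCongr σ (Equiv.refl _)) f) σ
    rw [← this] at h2
    rw [h2, smul_mul_assoc, mul_smul_comm]
    simp
  have h2 : (r+1).factorial • XX j e y ^ (r+1) =
      ∑ σ : Equiv.Perm (Fin (r+1)), XX j e y ^ (r+1) := by
    rw [Finset.sum_const, Finset.card_univ, Fintype.card_perm, Fintype.card_fin]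
  rw [h2, Finset.sum_congr rfl fun σ _ => h1 σ, Finset.sum_comm]
  refine Finset.sum_congr rfl fun f _ => ?_
  rw [j_std j hj, Finset.sum_mul]
  rfl

theorem std_zero (j : A →ₗ[K] T) (hj : ∀ a b, j (a * b) = j a * j b) {n : ℕ}
    (x : Fin (n + 1) → A) (i : Fin (n+1)) (h : x i = 0) : j (stdPoly x) = 0 := by
  rw [j_std j hj]
  refine Finset.sum_eq_zero fun σ _ => ?_
  rw [List.prod_eq_zero, smul_zero]
  rw [List.mem_ofFn']
  exact ⟨σ⁻¹ i, by simp [h]⟩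

theorem hyp_transfer (j : A →ₗ[K] T) (hj : ∀ a b, j (a * b) = j a * j b) (e : Fin (N+1) → T)
    (hc : ∀ i a, Commute (e i) (j a))
    (hperm : ∀ (r : ℕ) (f : Fin r → Fin (N+1)) (σ : Equiv.Perm (Fin r)),
      eP e (f ∘ σ) = (Equiv.Perm.sign σ : ℤ) • eP e f)
    (k m : ℕ) (hS : ∀ x : Fin (k + 1) → A, j (stdPoly x) * j (x 0) ^ m = 0)
    (y : Fin (N+1) → A) :
    (XX j e y ^ (k+1) - XX j e (Function.update y 0 0) ^ (k+1)) * j (y 0) ^ m = 0 := by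
  apply nsmul_cancel K (k+1).factorial (Nat.factorial_ne_zero _)
  rw [← smul_mul_assoc, smul_sub, XX_pow_std j hj e hc hperm, XX_pow_std j hj e hc hperm,
    ← Finset.sum_sub_distrib, Finset.sum_mul]
  refine Finset.sum_eq_zero fun f _ => ?_
  by_cases h : ∃ i, f i = 0
  · obtain ⟨i, hi⟩ := h
    rw [std_zero j hj (Function.update y 0 0 ∘ f) i (by simp [hi]), zero_mul, sub_zero]
    have hce : Commute (eP e f) (j (y 0) ^ m) := by
      apply Commute.pow_right
      apply Commute.list_prod_left
      intro z hz
      obtain ⟨i, rfl⟩ := (List.mem_ofFn' _ _).mp hz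
      exact hc _ _
    rw [mul_assoc, hce.eq, ← mul_assoc]
    have h1 := hS ((y ∘ f) ∘ Equiv.swap 0 i)
    rw [stdPoly_perm, map_zsmul, smul_mul_assoc] at h1
    simp only [Function.comp_apply, Equiv.swap_apply_left, hi] at h1
    have h2 := congrArg (fun z => ((Equiv.Perm.sign (Equiv.swap 0 i) : ℤˣ) : ℤ) • z) h1
    simp only [smul_smul, smul_zero, ← Units.val_mul, Int.units_mul_self, Units.val_one, one_smul] at h2
    rw [h2, zero_mul]
  · push Not at h
    have : Function.update y 0 0 ∘ f = y ∘ f := by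
      ext i; simp [h i]
    rw [this, sub_self, zero_mul]

theorem XX_top (j : A →ₗ[K] T) (hj : ∀ a b, j (a * b) = j a * j b) (e : Fin (N+1) → T)
    (hc : ∀ i a, Commute (e i) (j a))
    (hperm : ∀ (r : ℕ) (f : Fin r → Fin (N+1)) (σ : Equiv.Perm (Fin r)),
      eP e (f ∘ σ) = (Equiv.Perm.sign σ : ℤ) • eP e f)
    (y : Fin (N+1) → A) :
    XX j e y ^ (N+1) = j (stdPoly y) * eP e id := by
  have hinj : ∀ f : Fin (N+1) → Fin (N+1), ¬ Function.Bijective f → eP e f = 0 := by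
    intro f hf
    rw [← Finite.injective_iff_bijective] at hf
    simp only [Function.Injective, not_forall] at hf
    obtain ⟨a, b, hab, hne⟩ := hf
    have h1 := hperm _ f (Equiv.swap a b)
    have h2 : f ∘ Equiv.swap a b = f := by
      ext i
      simp only [Function.comp_apply]
      rcases eq_or_ne i a with rfl | ha
      · simp [hab]
      rcases eq_or_ne i b with rfl | hb
      · simp [hab]
      rw [Equiv.swap_apply_of_ne_of_ne ha hb]
    rw [h2, Equiv.Perm.sign_swap hne] at h1
    apply nsmul_cancel K 2 two_ne_zero
    rw [two_nsmul]
    nth_rw 1 [h1]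
    simp
  rw [XX_pow j e hc, j_std j hj, Finset.sum_mul]
  symm
  refine Finset.sum_of_injOn (fun σ : Equiv.Perm (Fin (N+1)) => (σ : Fin (N+1) → Fin (N+1)))
    (fun a _ b _ h => DFunLike.coe_injective h) (by simp) ?_ ?_
  · intro f _ hf
    rw [hinj f, mul_zero]
    intro hb
    exact hf ⟨Equiv.ofBijective f hb, by simp, rfl⟩
  · intro σ _
    have := hperm _ id σ
    rw [Function.id_comp] at this
    rw [this, smul_mul_assoc, mul_smul_comm]

theorem main_abs (j : A →ₗ[K] T) (hj : ∀ a b, j (a * b) = j a * j b) (k m : ℕ) (hk : 1 ≤ k)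
    (e : Fin (k+3) → T)
    (he : ∀ i k, e i * e k = -(e k * e i))
    (hc : ∀ i a, Commute (e i) (j a))
    (hperm : ∀ (r : ℕ) (f : Fin r → Fin (k+3)) (σ : Equiv.Perm (Fin r)),
      eP e (f ∘ σ) = (Equiv.Perm.sign σ : ℤ) • eP e f)
    (hcomm : ∀ x y z : A, Commute (j (x * y - y * x)) (j z))
    (hS : ∀ x : Fin (k + 1) → A, j (stdPoly x) * j (x 0) ^ (m+1) = 0)
    (y : Fin (k+3) → A) :
    j (stdPoly y) * eP e id * j (y 0) ^ m = 0 := by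
  set y' := Function.update y 0 0 with hy'
  set ξ := XX j e y' with hξ
  have hXX : ∀ x, XX j e (Function.update y 0 x) = e 0 * j x + ξ := by
    intro x
    rw [hξ]
    unfold XX
    rw [Fin.sum_univ_succ (n := k+2), Fin.sum_univ_succ (n := k+2) (fun i => e i * j (y' i))]
    simp [hy', Fin.succ_ne_zero]
  have hξtop : ξ ^ (k+3) = 0 := by
    rw [hξ, XX_top j hj e hc hperm, std_zero j hj y' 0 (by simp [hy']), zero_mul]
  have hi : e 0 * ξ = - (ξ * e 0) := by
    rw [hξ]; unfold XX
    rw [Finset.mul_sum, Finset.sum_mul, ← Finset.sum_neg_distrib]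
    refine Finset.sum_congr rfl fun k _ => ?_
    rw [mul_assoc, ← (hc 0 _).eq, ← mul_assoc, ← mul_assoc, he]; simp
  have h00 : e 0 * e 0 = 0 := by
    apply nsmul_cancel K 2 two_ne_zero
    rw [two_nsmul]
    nth_rw 1 [he]
    simp
  have hdξ : ∀ x : A, (j x * ξ - ξ * j x) * ξ = -(ξ * (j x * ξ - ξ * j x)) := by
    intro x
    have h1 := XX_anti j e he hc (fun i => x * y' i - y' i * x) y' (fun i z => hcomm _ _ _)
    rwa [← XX_delta j hj e hc, ← hξ] at h1
  have hed : ∀ x : A, e 0 * (j x * ξ - ξ * j x) = -((j x * ξ - ξ * j x) * e 0) := by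
    intro x
    rw [mul_sub, sub_mul, ← mul_assoc, (hc 0 x).eq, mul_assoc, hi, ← mul_assoc (e 0), hi,
        mul_assoc ξ (j x), ← (hc 0 x).eq]
    simp only [mul_neg, neg_mul, mul_assoc]
    abel
  have hev := fun (x : A) (n : ℕ) =>
    X_even (j x) ξ (e 0) _ hi h00 (hc 0 x).eq rfl (hed x) (hdξ x) n
  have hod := fun (x : A) (n : ℕ) =>
    X_odd (j x) ξ (e 0) _ hi h00 (hc 0 x).eq rfl (hed x) (hdξ x) n
  have hH : ∀ x, ((e 0 * j x + ξ) ^ (k+1) - ξ ^ (k+1)) * j x ^ (m+1) = 0 := by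
    intro x
    have := hyp_transfer j hj e hc hperm k (m+1) hS (Function.update y 0 x)
    rw [hXX, Function.update_idem, Function.update_self] at this
    exact this
  have hgoal : j (stdPoly y) * eP e id = (e 0 * j (y 0) + ξ) ^ (k+3) - ξ ^ (k+3) := by
    rw [hξtop, sub_zero, ← hXX, Function.update_eq_self, XX_top j hj e hc hperm]
  rw [hgoal]
  rcases Nat.even_or_odd' (k+1) with ⟨n, hn | hn⟩
  · obtain ⟨n, rfl⟩ : ∃ n', n = n' + 1 := ⟨n - 1, by omega⟩
    have hk3 : ∀ z : T, z ^ (k + 3) = z ^ (2 * (n + 1 + 1)) := fun z => by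
      rw [show k + 3 = 2 * (n + 1 + 1) by omega]
    have hk1 : ∀ z : T, z ^ (k + 1) = z ^ (2 * (n + 1)) := fun z => by rw [hn]
    rw [hk3, hk3, hev, pow_mul ξ 2, sq ξ, add_sub_cancel_left, smul_mul_assoc,
      core_even j hj e he hc y' hcomm (e 0) n m ?_ (y 0), smul_zero]
    intro x
    have := hH x
    rw [hk1, hk1, hev, pow_mul ξ 2, sq ξ, add_sub_cancel_left, smul_mul_assoc] at this
    exact nsmul_cancel K _ (by omega) _ this
  · obtain ⟨n, rfl⟩ : ∃ n', n = n' + 1 := ⟨n - 1, by omega⟩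
    have hk3 : ∀ z : T, z ^ (k + 3) = z ^ (2 * (n + 1 + 1) + 1) := fun z => by
      rw [show k + 3 = 2 * (n + 1 + 1) + 1 by omega]
    have hk1 : ∀ z : T, z ^ (k + 1) = z ^ (2 * (n + 1) + 1) := fun z => by rw [hn]
    rw [hk3, hk3, hod, add_sub_cancel_left]
    refine core_odd j hj e he hc y' hcomm (e 0) (fun i => he i 0) (hc 0) n m ?_ (y 0)
    intro x
    have := hH x
    rwa [hk1, hk1, hod, add_sub_cancel_left] at this
end transfer

section final
open TensorProduct
theorem final_abs (K : Type*) [Field K] [CharZero K]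
    (A : Type*) [NonUnitalRing A] [Module K A] [SMulCommClass K A A] [IsScalarTower K A A]
    (k m : ℕ) (hk : 1 ≤ k)
    (hcomm : ∀ x y z : A, (x * y - y * x) * z - z * (x * y - y * x) = 0)
    (hS : ∀ x : Fin (k + 1) → A, stdPoly x * powSucc (x 0) m = 0) (y : Fin (k+3) → A) :
    (Unitization.inr (stdPoly y) * Unitization.inr (y 0) ^ m : Unitization K A) = 0 := by
  let U := Unitization K A
  let E := ExteriorAlgebra K (Fin (k+3) → K)
  let b : Fin (k+3) → (Fin (k+3) → K) := fun i => Pi.single i 1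
  let jU : A →ₗ[K] U := Unitization.inrHom K K A
  let j : A →ₗ[K] E ⊗[K] U := (Algebra.TensorProduct.includeRight : U →ₐ[K] E ⊗[K] U).toLinearMap ∘ₗ jU
  have hjU : ∀ a, jU a = Unitization.inr a := fun a => rfl
  have hja : ∀ a, j a = (1 : E) ⊗ₜ[K] (Unitization.inr a : U) := fun a => rfl
  have hj : ∀ a b, j (a * b) = j a * j b := by
    intro a b
    rw [hja, hja, hja, Algebra.TensorProduct.tmul_mul_tmul, one_mul, Unitization.inr_mul]
  let e : Fin (k+3) → E ⊗[K] U := fun i => ExteriorAlgebra.ι K (b i) ⊗ₜ[K] (1 : U)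
  have heP : ∀ (r : ℕ) (f : Fin r → Fin (k+3)),
      eP e f = ExteriorAlgebra.ιMulti K r (fun i => b (f i)) ⊗ₜ[K] (1 : U) := by
    intro r f
    have := map_list_prod (Algebra.TensorProduct.includeLeft : E →ₐ[K] E ⊗[K] U)
      (List.ofFn fun i => ExteriorAlgebra.ι K (b (f i)))
    rw [List.map_ofFn] at this
    rw [ExteriorAlgebra.ιMulti_apply]
    exact this.symm
  have h := main_abs j hj k m hk e
    (by
      intro i l
      have h0 := ExteriorAlgebra.ι_add_mul_swap (R := K) (b i) (b l)
      rw [← eq_neg_iff_add_eq_zero] at h0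
      simp only [e]
      rw [Algebra.TensorProduct.tmul_mul_tmul, Algebra.TensorProduct.tmul_mul_tmul, h0, neg_tmul])
    (by
      intro i a
      simp only [Commute, SemiconjBy, e, hja, Algebra.TensorProduct.tmul_mul_tmul, one_mul, mul_one])
    (by
      intro r f σ
      rw [heP, heP]
      have := (ExteriorAlgebra.ιMulti K r (M := Fin (k+3) → K)).map_perm (fun i => b (f i)) σ
      have h2 : (fun i => b ((f ∘ σ) i)) = (fun i => b (f i)) ∘ σ := rfl
      rw [h2, this, Units.smul_def]
      exact TensorProduct.smul_tmul' (R := K) _ _ _)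
    (by
      intro x y z
      show _ = _
      rw [← hj, ← hj, sub_eq_zero.mp (hcomm x y z)])
    (by
      intro x
      rw [← j_powSucc j hj, ← hj, hS, map_zero]) y
  have hjp : j (y 0) ^ m = (1 : E) ⊗ₜ[K] ((Unitization.inr (y 0) : U) ^ m) := by
    rw [hja, Algebra.TensorProduct.tmul_pow, one_pow]
  rw [hjp, heP, hja, Algebra.TensorProduct.tmul_mul_tmul, Algebra.TensorProduct.tmul_mul_tmul] at h
  simp only [one_mul, mul_one] at h
  let φ : E →ₗ[K] K := ExteriorAlgebra.liftAlternating (R := K) (M := Fin (k+3) → K)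
    (fun i => if hi : i = k + 3 then hi ▸ Matrix.detRowAlternating else 0)
  have hφ : φ (ExteriorAlgebra.ιMulti K (k+3) (fun i => b (id i))) = 1 := by
    simp only [φ]
    rw [ExteriorAlgebra.liftAlternating_apply_ιMulti]
    simp only [dite_true]
    have : (fun i => b (id i)) = (1 : Matrix (Fin (k+3)) (Fin (k+3)) K) := by
      ext i l
      simp [b, Matrix.one_apply, Pi.single_apply, eq_comm]
    rw [this]
    exact Matrix.det_one
  have h2 := congrArg (fun z => TensorProduct.lid K U (φ.rTensor U z)) h
  simp only [LinearMap.rTensor_tmul, TensorProduct.lid_tmul, map_zero, hφ, one_smul] at h2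
  exact h2
end final

theorem stmt_6 (K : Type*) [Field K] [CharZero K]
    (A : Type*) [NonUnitalRing A] [Module K A] [SMulCommClass K A A] [IsScalarTower K A A]
    (k m : ℕ) (hk : 1 ≤ k) (hm : 1 ≤ m)
    (hcomm : ∀ x y z : A, (x * y - y * x) * z - z * (x * y - y * x) = 0)
    (hS : ∀ x : Fin (k + 1) → A, stdPoly x * powSucc (x 0) (m - 1) = 0) :
    (m = 1 → ∀ x : Fin (k + 3) → A, stdPoly x = 0) ∧
    (2 ≤ m → ∀ x : Fin (k + 3) → A, stdPoly x * powSucc (x 0) (m - 2) = 0) := by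
  have h := final_abs K A k (m - 1) hk hcomm hS
  constructor
  · rintro rfl x
    have := h x
    simp only [le_refl, Nat.sub_self, pow_zero, mul_one] at this
    exact Unitization.inr_injective (R := K) (by rw [this, Unitization.inr_zero])
  · intro h2 x
    obtain ⟨m, rfl⟩ : ∃ m', m = m' + 2 := ⟨m - 2, by omega⟩
    have h3 := h x
    have h4 := j_powSucc (Unitization.inrHom K K A) (fun a b => Unitization.inr_mul K a b) m (x 0)
    have h5 : (Unitization.inr (powSucc (x 0) m) : Unitization K A) = Unitization.inr (x 0) ^ (m+1) := h4
    rw [show m + 2 - 1 = m + 1 by omega, ← h5, ← Unitization.inr_mul] at h3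
    exact Unitization.inr_injective (R := K) (by rw [Unitization.inr_zero]; exact h3)
end

section
/- Let K be a field of characteristic zero, let n ≥ 1, and let A be an associative (not necessarily unital) K-algebra satisfying the standard identity S₃(x,y,z) = 0 for all x, y, z ∈ A and xⁿ = 0 for all x ∈ A. Then every product of n + 1 elements of A vanishes: x₁x₂⋯x₊₁ = 0 for all x₁, …, x₊₁ ∈ A. In particular, for n = 3 one has (xy − yx)² = 0 for all x, y ∈ A. -/
theorem aux_tf (K : Type*) [Field K] [CharZero K] {V : Type*} [AddCommGroup V] [Module K V]
    (m : ℤ) (hm : m ≠ 0) (a : V) (h : m • a = 0) : a = 0 := by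
  have h' : ((m : K)) • a = 0 := by rw [Int.cast_smul_eq_zsmul]; exact h
  rcases smul_eq_zero.1 h' with h | h
  · exact absurd (by exact_mod_cast h) hm
  · exact h

section ids
variable {A : Type*} [NonUnitalRing A]

theorem aux_E1 (S : ∀ x y z : A,
      x * y * z + y * z * x + z * x * y - y * x * z - x * z * y - z * y * x = 0) (x b c w : A) :
    x * (b * c - c * b) * w - (b * x - x * b) * (c * w - w * c)
      + (c * x - x * c) * (b * w - w * b) = 0 := by
  have h0 := S (x * w) b c
  have h1 := congrArg (· * w) (S x b c)
  have h2 := congrArg (x * ·) (S w b c)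
  simp only [mul_add, add_mul, mul_sub, sub_mul, mul_assoc, mul_zero, zero_mul] at h0 h1 h2 ⊢
  linear_combination (norm := abel) h1 + h2 - h0

theorem aux_E3 (K : Type*) [Field K] [CharZero K] [Module K A]
    (E1 : ∀ x b c w : A, x * (b * c - c * b) * w - (b * x - x * b) * (c * w - w * c)
      + (c * x - x * c) * (b * w - w * b) = 0) (b x e c w : A) :
    (b * x - x * b) * e * (c * w - w * c) = 0 := by
  have E2 : ∀ b x c w : A, (b * x - x * b) * e * (c * w - w * c)
      = (c * x - x * c) * e * (b * w - w * b) := by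
    intro b x c w
    have h0 := E1 x b c (e * w)
    have h1 := congrArg (· * w) (E1 x b c e)
    simp only [mul_add, add_mul, mul_sub, sub_mul, mul_assoc, mul_zero, zero_mul] at h0 h1 ⊢
    linear_combination (norm := abel) h1 - h0
  have anti : ∀ b x c w : A, (b * x - x * b) * e * (c * w - w * c)
      = - ((x * b - b * x) * e * (c * w - w * c)) := by
    intro b x c w
    rw [← neg_mul, ← neg_mul, neg_sub]
  apply aux_tf K 2 (by norm_num)
  have e1 := E2 b x c w
  have e2 := anti c x b w
  have e3 := E2 x c b w
  have e4 := anti b c x w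
  have e5 := E2 c b x w
  have e6 := anti x b c w
  rw [e2, e3, e4, neg_neg, e5, e6] at e1
  rw [two_smul]
  nth_rewrite 1 [e1]
  abel

theorem aux_C1 (K : Type*) [Field K] [CharZero K] [Module K A]
    (E1 : ∀ x b c w : A, x * (b * c - c * b) * w - (b * x - x * b) * (c * w - w * c)
      + (c * x - x * c) * (b * w - w * b) = 0)
    (E3 : ∀ b x e c w : A, (b * x - x * b) * e * (c * w - w * c) = 0) (x b c e w : A) :
    x * (b * c - c * b) * e * w = 0 := by
  apply aux_tf K 6 (by norm_num)
  have h0 := E1 (x * c) b w e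
  have h1 := E3 w x e b c
  have h2 := E1 x (w * e) b c
  have h3 := E1 x (w * e) c b
  have h4 := congrArg (· * e) (E1 x b w c)
  have h5 := E3 w x c b e
  have h6 := E1 x (w * c) b e
  have h7 := congrArg (· * e) (E1 x c w b)
  have h8 := congrArg (· * e) (E1 x b c w)
  have h9 := E1 (x * b) c w e
  have h10 := E1 (x * w) b c e
  have h11 := congrArg (· * c) (E1 x b w e)
  have h12 := E3 c x w b e
  have h13 := E1 (w * x) c e b
  have h14 := E1 (w * x) b e c
  have h15 := congrArg (w * ·) (E1 x b c e)
  have h16 := E1 w c (x * e) b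
  have h17 := congrArg (x * ·) (E1 w c e b)
  have h18 := E1 w c x (b * e)
  have h19 := E3 e w x b c
  have h20 := E3 c w x b e
  have h21 := E3 c w b e x
  have h22 := E1 (b * x) c w e
  have h23 := congrArg (c * ·) (E1 x b w e)
  have h24 := E3 b w x c e
  simp only [mul_add, add_mul, mul_sub, sub_mul, mul_assoc, mul_zero, zero_mul] at *
  linear_combination (norm := abel) (6 : ℤ) • h0 +
      (-4 : ℤ) • h1 +
      (-2 : ℤ) • h2 +
      (2 : ℤ) • h3 +
      (-2 : ℤ) • h4 +
      (2 : ℤ) • h5 +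
      (1 : ℤ) • h6 +
      (2 : ℤ) • h7 +
      (6 : ℤ) • h8 +
      (-6 : ℤ) • h9 +
      (-3 : ℤ) • h10 +
      (1 : ℤ) • h11 +
      (-1 : ℤ) • h12 +
      (2 : ℤ) • h13 +
      (-2 : ℤ) • h14 +
      (4 : ℤ) • h15 +
      (-1 : ℤ) • h16 +
      (1 : ℤ) • h17 +
      (1 : ℤ) • h18 +
      (4 : ℤ) • h19 +
      (5 : ℤ) • h20 +
      (-1 : ℤ) • h21 +
      (6 : ℤ) • h22 +
      (-6 : ℤ) • h23 +
      (2 : ℤ) • h24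

theorem aux_C2 (K : Type*) [Field K] [CharZero K] [Module K A]
    (E1 : ∀ x b c w : A, x * (b * c - c * b) * w - (b * x - x * b) * (c * w - w * c)
      + (c * x - x * c) * (b * w - w * b) = 0)
    (E3 : ∀ b x e c w : A, (b * x - x * b) * e * (c * w - w * c) = 0) (x e b c w : A) :
    x * e * (b * c - c * b) * w = 0 := by
  apply aux_tf K 6 (by norm_num)
  have h0 := E1 (x * e) b c w
  have h1 := E1 x b e (c * w)
  have h2 := E1 x c (e * b) w
  have h3 := congrArg (· * b) (E1 x c e w)
  have h4 := E1 x b e (w * c)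
  have h5 := E1 x b c (e * w)
  have h6 := congrArg (· * w) (E1 x b c e)
  have h7 := E1 b w (x * e) c
  have h8 := congrArg (· * e) (E1 b w x c)
  have h9 := E1 (w * x) b e c
  have h10 := congrArg (w * ·) (E1 x b e c)
  have h11 := E3 e x b c w
  have h12 := E3 e w x b c
  have h13 := congrArg (e * ·) (E1 x b w c)
  have h14 := E1 x b (w * c) e
  have h15 := congrArg (· * b) (E1 x e w c)
  have h16 := congrArg (x * ·) (E1 e b w c)
  have h17 := congrArg (· * c) (E1 x e w b)
  have h18 := E3 w x c b e
  have h19 := E1 x b w (e * c)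
  have h20 := E1 x (w * e) b c
  have h21 := E3 b x e c w
  have h22 := E1 x (e * b) w c
  have h23 := congrArg (· * e) (E1 x b w c)
  have h24 := E3 w x b c e
  have h25 := congrArg (w * ·) (E1 x b c e)
  simp only [mul_add, add_mul, mul_sub, sub_mul, mul_assoc, mul_zero, zero_mul] at *
  linear_combination (norm := abel) (3 : ℤ) • h0 +
      (4 : ℤ) • h1 +
      (-3 : ℤ) • h2 +
      (3 : ℤ) • h3 +
      (-3 : ℤ) • h4 +
      (-6 : ℤ) • h5 +
      (6 : ℤ) • h6 +
      (1 : ℤ) • h7 +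
      (-1 : ℤ) • h8 +
      (2 : ℤ) • h9 +
      (-2 : ℤ) • h10 +
      (-3 : ℤ) • h11 +
      (-3 : ℤ) • h12 +
      (1 : ℤ) • h13 +
      (1 : ℤ) • h14 +
      (1 : ℤ) • h15 +
      (-2 : ℤ) • h16 +
      (-2 : ℤ) • h17 +
      (-4 : ℤ) • h18 +
      (1 : ℤ) • h19 +
      (1 : ℤ) • h20 +
      (-1 : ℤ) • h21 +
      (2 : ℤ) • h22 +
      (-2 : ℤ) • h23 +
      (4 : ℤ) • h24 +
      (-1 : ℤ) • h25

theorem aux_n3 (K : Type*) [Field K] [CharZero K] [Module K A] (S : ∀ x y z : A,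
      x * y * z + y * z * x + z * x * y - y * x * z - x * z * y - z * y * x = 0)
    (h : ∀ x : A, x * x * x = 0) (a b c d : A) : a * b * c * d = 0 := by
  have P : ∀ x y z : A,
      x * y * z + y * z * x + z * x * y + y * x * z + x * z * y + z * y * x = 0 := by
    intro x y z
    have a1 := h (x + y + z)
    have a2 := h (x + y)
    have a3 := h (x + z)
    have a4 := h (y + z)
    have a5 := h x
    have a6 := h y
    have a7 := h z
    simp only [mul_add, add_mul, mul_assoc] at *
    linear_combination (norm := abel) a1 - a2 - a3 - a4 + a5 + a6 + a7
  apply aux_tf K 6 (by norm_num)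
  have h0 := S (d * a) b c
  have h1 := P (d * a) b c
  have h2 := S (a * b) c d
  have h3 := P (a * b) c d
  have h4 := P (b * c) a d
  have h5 := S (b * c) a d
  have h6 := P (c * d) a b
  have h7 := S (c * d) a b
  simp only [mul_add, add_mul, mul_sub, sub_mul, mul_assoc, mul_zero, zero_mul] at *
  linear_combination (norm := abel) (-2 : ℤ) • h0 +
      (-2 : ℤ) • h1 +
      (1 : ℤ) • h2 +
      (1 : ℤ) • h3 +
      (1 : ℤ) • h4 +
      (-1 : ℤ) • h5 +
      (1 : ℤ) • h6 +
      (1 : ℤ) • h7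

end ids

section lin
variable {K : Type*} [Field K] [CharZero K] {U : Type*} [Ring U] [Algebra K U]

def auxCf (Y W : U) : ℕ → ℕ → U
  | 0, 0 => 1
  | 0, _ + 1 => 0
  | n + 1, 0 => auxCf Y W n 0 * Y
  | n + 1, i + 1 => auxCf Y W n (i + 1) * Y + auxCf Y W n i * W

theorem auxCf_zero (Y W : U) (n : ℕ) : auxCf Y W n 0 = Y ^ n := by
  induction n with
  | zero => simp [auxCf]
  | succ n ih => simp [auxCf, ih, pow_succ]

theorem auxCf_one (Y W : U) (n : ℕ) :
    auxCf Y W n 1 = ∑ i ∈ Finset.range n, Y ^ i * W * Y ^ (n - 1 - i) := by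
  induction n with
  | zero => simp [auxCf]
  | succ n ih =>
    rw [Finset.sum_range_succ]
    simp only [auxCf, ih, auxCf_zero, Finset.sum_mul]
    congr 1
    · apply Finset.sum_congr rfl
      intro i hi
      have := Finset.mem_range.1 hi
      rw [mul_assoc, ← pow_succ]
      congr 2
      omega
    · simp

theorem auxCf_big (Y W : U) (n : ℕ) : ∀ i, n < i → auxCf Y W n i = 0 := by
  induction n with
  | zero => intro i hi; cases i with
    | zero => omega
    | succ i => rfl
  | succ n ih => intro i hi; cases i with
    | zero => omega
    | succ i => simp [auxCf, ih (i + 1) (by omega), ih i (by omega)]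

theorem auxCf_pow (Y W : U) (t : K) (n : ℕ) :
    (Y + t • W) ^ n = ∑ i ∈ Finset.range (n + 1), t ^ i • auxCf Y W n i := by
  induction n with
  | zero => simp [auxCf]
  | succ n ih =>
    rw [pow_succ, ih, Finset.sum_range_succ' _ (n + 1)]
    simp only [auxCf, smul_add, Finset.sum_add_distrib]
    rw [mul_add, Finset.sum_mul, Finset.sum_mul]
    have e1 : ∑ i ∈ Finset.range (n + 1), (t ^ i • auxCf Y W n i) * Y
        = ∑ i ∈ Finset.range (n + 1), t ^ (i + 1) • (auxCf Y W n (i + 1) * Y)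
          + t ^ 0 • (auxCf Y W n 0 * Y) := by
      rw [← Finset.sum_range_succ' (fun i => t ^ i • (auxCf Y W n i * Y)),
        Finset.sum_range_succ _ (n + 1), auxCf_big Y W n (n + 1) (by omega)]
      simp
    have e2 : ∑ i ∈ Finset.range (n + 1), (t ^ i • auxCf Y W n i) * (t • W)
        = ∑ i ∈ Finset.range (n + 1), t ^ (i + 1) • (auxCf Y W n i * W) := by
      apply Finset.sum_congr rfl
      intro i _
      rw [smul_mul_smul_comm, pow_succ]
    rw [e1, e2]
    abel

theorem aux_lin_s7 {V : Type*} [AddCommGroup V] [Module K V] (g : U →ₗ[K] V) (Y W : U) (n : ℕ)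
    (hn : 1 ≤ n) (h : ∀ t : K, g ((Y + t • W) ^ n) = 0) :
    g (∑ i ∈ Finset.range n, Y ^ i * W * Y ^ (n - 1 - i)) = 0 := by
  rw [← auxCf_one]
  rw [← Module.forall_dual_apply_eq_zero_iff K]
  intro φ
  have hp : (∑ i ∈ Finset.range (n + 1),
      Polynomial.monomial i (φ (g (auxCf Y W n i))) : Polynomial K) = 0 := by
    apply Polynomial.funext
    intro t
    have := congrArg φ (h t)
    rw [auxCf_pow] at this
    simp only [map_sum, map_smul, smul_eq_mul, map_zero] at this
    rw [Polynomial.eval_finsetSum]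
    simp only [Polynomial.eval_monomial, Polynomial.eval_zero]
    rw [← this]
    apply Finset.sum_congr rfl
    intro i _
    ring
  have := congrArg (fun p => Polynomial.coeff p 1) hp
  simp only [Polynomial.finsetSum_coeff, Polynomial.coeff_monomial, Polynomial.coeff_zero] at this
  rw [Finset.sum_ite_eq' ] at this
  simpa [Nat.pos_of_ne_zero (by omega : n ≠ 0)] using this

end lin

section main
variable {K : Type*} [Field K] [CharZero K] {A : Type*} [NonUnitalRing A] [Module K A]
  {U : Type*} [Ring U] [Algebra K U] (f : A →ₙₐ[K] U)

theorem aux_left (l : List A) : ∀ x : A, ∃ a, f x * (l.map f).prod = f a := by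
  induction l with
  | nil => intro x; exact ⟨x, by simp⟩
  | cons b l ih =>
    intro x
    obtain ⟨a, ha⟩ := ih (x * b)
    exact ⟨a, by rw [← ha, map_mul]; simp [mul_assoc]⟩

theorem aux_right (l : List A) (z : A) : ∃ a, (l.map f).prod * f z = f a := by
  induction l with
  | nil => exact ⟨z, by simp⟩
  | cons b l ih =>
    obtain ⟨a, ha⟩ := ih
    exact ⟨b * a, by simp [mul_assoc, ha]⟩

theorem aux_perm_s7 (C1 : ∀ x b c e w : A, x * (b * c - c * b) * e * w = 0)
    (C2 : ∀ x e b c w : A, x * e * (b * c - c * b) * w = 0) (x z : A) {l l' : List A}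
    (h : l.Perm l') : ∀ p : List A, 3 ≤ p.length + l.length →
      f x * ((p ++ l).map f).prod * f z = f x * ((p ++ l').map f).prod * f z := by
  induction h with
  | nil => intro p _; rfl
  | cons a _ ih =>
    intro p hp
    have := ih (p ++ [a]) (by simp at hp ⊢; omega)
    simpa using this
  | trans h1 _ ih1 ih2 =>
    intro p hp
    rw [ih1 p hp, ih2 p (by rw [← h1.length_eq]; exact hp)]
  | swap a b l =>
    intro p hp
    have key : f x * (p.map f).prod * (f b * f a - f a * f b) * ((l.map f).prod * f z) = 0 := by
      cases p with
      | cons e p =>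
        obtain ⟨e', he⟩ := aux_left f p e
        obtain ⟨z', hz⟩ := aux_right f l z
        have := congrArg f (C2 x e' b a z')
        simp only [map_mul, map_sub, map_zero] at this
        rw [List.map_cons, List.prod_cons, he, hz, this]
      | nil =>
        cases l with
        | nil => simp at hp
        | cons e l =>
          obtain ⟨z', hz⟩ := aux_right f l z
          have := congrArg f (C1 x b a e z')
          simp only [map_mul, map_sub, map_zero] at this
          rw [List.map_cons, List.prod_cons, mul_assoc (f e), hz, ← mul_assoc]
          simpa using this
    simp only [List.map_append, List.map_cons, List.prod_append, List.prod_cons]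
    rw [← sub_eq_zero, ← key]
    noncomm_ring

theorem aux_pow (x : A) (k : ℕ) : f (powSucc x k) = f x ^ (k + 1) := by
  induction k with
  | zero => simp [powSucc]
  | succ k ih => rw [powSucc, map_mul, ih, ← pow_succ]

theorem aux_core (C1 : ∀ x b c e w : A, x * (b * c - c * b) * e * w = 0)
    (C2 : ∀ x e b c w : A, x * e * (b * c - c * b) * w = 0)
    (E3 : ∀ b x e c w : A, (b * x - x * b) * e * (c * w - w * c) = 0)
    (k : ℕ) (hk : 2 ≤ k) (h2 : ∀ x : A, powSucc x (k + 1) = 0) (x y z : A) :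
    f x * f y ^ (k + 1) * f z = 0 := by
  have D : ∀ w : A, ∑ i ∈ Finset.range (k + 2), f y ^ i * f w * f y ^ (k + 1 - i) = 0 := by
    intro w
    have := aux_lin_s7 (K := K) (LinearMap.id : U →ₗ[K] U) (f y) (f w) (k + 2) (by omega) (by
      intro t
      have := aux_pow f (y + t • w) (k + 1)
      rw [h2] at this
      simpa using this.symm)
    simpa using this
  have perm := fun (x z : A) (l l' : List A) (h : l.Perm l') (hl : 3 ≤ l.length) =>
    aux_perm_s7 f C1 C2 x z h [] (by simpa using hl)
  set p := f x * f y ^ (k + 1) * f z with hp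
  set q := f y * f x * f y ^ k * f z with hq
  set r := f x * f y ^ k * f z * f y with hr
  set s := f y * f x * f y ^ (k - 1) * f z * f y with hs
  have eA : p + ((k : K) + 1) • q = 0 := by
    have h := congrArg (· * f z) (D x)
    simp only [zero_mul, Finset.sum_mul] at h
    rw [Finset.sum_range_succ'] at h
    rw [Finset.sum_congr rfl (g := fun _ => q)] at h
    · simp only [Finset.sum_const, Finset.card_range, pow_zero, one_mul] at h
      rw [← h, ← Nat.cast_smul_eq_nsmul K]
      push_cast
      simp only [hp, Nat.sub_zero]
      abel
    · intro i hi
      have hi := Finset.mem_range.1 hi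
      have := perm y z (List.replicate i y ++ x :: List.replicate (k - i) y)
        (x :: List.replicate k y) (by
          refine List.perm_middle.trans (List.Perm.cons _ ?_)
          rw [← List.replicate_add]
          rw [show i + (k - i) = k by omega]) (by simp; omega)
      simp at this
      rw [hq, pow_succ', show k + 1 - (i + 1) = k - i by omega]
      simpa [mul_assoc] using this
  have eB : p + ((k : K) + 1) • r = 0 := by
    have h := congrArg (f x * ·) (D z)
    simp only [mul_zero, Finset.mul_sum] at h
    rw [Finset.sum_range_succ] at h
    rw [Finset.sum_congr rfl (g := fun _ => r)] at h
    · simp only [Finset.sum_const, Finset.card_range, Nat.sub_self, pow_zero, mul_one] at h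
      rw [← h, ← Nat.cast_smul_eq_nsmul K]
      push_cast
      simp only [hp, mul_assoc]
      abel
    · intro i hi
      have hi := Finset.mem_range.1 hi
      have := perm x y (List.replicate i y ++ z :: List.replicate (k - i) y)
        (List.replicate k y ++ [z]) (by
          refine List.perm_middle.trans ?_
          rw [← List.replicate_add]
          rw [show i + (k - i) = k by omega]
          exact (List.perm_append_singleton _ _).symm) (by simp; omega)
      simp at this
      rw [hr, show k + 1 - i = k - i + 1 by omega, pow_succ]
      simpa [mul_assoc] using this
  have eC : r + (k : K) • s + q = 0 := by
    have h := D (x * z)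
    rw [Finset.sum_range_succ, Finset.sum_range_succ'] at h
    rw [Finset.sum_congr rfl (g := fun _ => s)] at h
    · have er : f y ^ 0 * f (x * z) * f y ^ (k + 1 - 0) = r := by
        have := perm x y (z :: List.replicate k y)
          (List.replicate k y ++ [z]) (List.perm_append_singleton _ _).symm (by simp; omega)
        simp at this
        rw [hr, Nat.sub_zero, pow_succ, map_mul]
        simpa [mul_assoc] using this
      have eq : f y ^ (k + 1) * f (x * z) * f y ^ (k + 1 - (k + 1)) = q := by
        have := perm y z (List.replicate k y ++ [x])
          (x :: List.replicate k y) (List.perm_append_singleton _ _) (by simp; omega)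
        simp at this
        rw [hq, Nat.sub_self, pow_succ', map_mul]
        simpa [mul_assoc] using this
      rw [er, eq] at h
      simp only [Finset.sum_const, Finset.card_range] at h
      rw [← h, ← Nat.cast_smul_eq_nsmul K]
      abel
    · intro i hi
      have hi := Finset.mem_range.1 hi
      have := perm y y (List.replicate i y ++ x :: z :: List.replicate (k - 1 - i) y)
        (x :: (List.replicate (k - 1) y ++ [z])) (by
          refine List.perm_middle.trans (List.Perm.cons _ ?_)
          refine List.perm_middle.trans ?_
          rw [← List.replicate_add]
          rw [show i + (k - 1 - i) = k - 1 by omega]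
          exact (List.perm_append_singleton _ _).symm) (by simp; omega)
      simp at this
      rw [hs, show k + 1 - (i + 1) = k - 1 - i + 1 by omega,
        pow_succ' (f y) i, pow_succ (f y) (k - 1 - i), map_mul]
      simpa [mul_assoc] using this
  have eD : p - r - q + s = 0 := by
    have h := congrArg f (E3 x y (powSucc y (k - 2)) y z)
    simp only [map_mul, map_sub, map_zero, aux_pow] at h
    obtain ⟨j, rfl⟩ : ∃ j, k = j + 2 := ⟨k - 2, by omega⟩
    simp only [Nat.add_sub_cancel] at h
    rw [← h, hp, hq, hr, hs, show j + 2 - 1 = j + 1 by omega]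
    have c1 : f y ^ (j + 2) = f y ^ (j + 1) * f y := pow_succ _ _
    have c2 : f y * f y ^ (j + 1) = f y ^ (j + 1) * f y := by rw [← pow_succ, ← pow_succ']
    have c3 : ∀ u, f y * (f y ^ (j + 1) * u) = f y ^ (j + 1) * (f y * u) := by
      intro u; rw [← mul_assoc, c2, mul_assoc]
    rw [pow_succ _ (j + 2), c1]
    simp only [mul_sub, sub_mul, mul_assoc, c3]
    abel
  have fin : ((k : K) + 2) • p = 0 := by
    linear_combination (norm := module) eA + eB - eC + (k : K) • eD
  rcases smul_eq_zero.1 fin with h | h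
  · exfalso
    have : ((k + 2 : ℕ) : K) ≠ 0 := Nat.cast_ne_zero.2 (by omega)
    apply this
    push_cast
    exact h
  · exact h

theorem aux_polar_s7 (C1 : ∀ x b c e w : A, x * (b * c - c * b) * e * w = 0)
    (C2 : ∀ x e b c w : A, x * e * (b * c - c * b) * w = 0)
    (k : ℕ) (hk : 2 ≤ k) (x z : A) (h : ∀ y, f x * f y ^ (k + 1) * f z = 0) (l : List A) :
    ∀ (j : ℕ) (_ : j + l.length = k + 1) (y : A), f x * f y ^ j * (l.map f).prod * f z = 0 := by
  induction l with
  | nil =>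
    intro j hj y
    simp at hj
    simpa [hj] using h y
  | cons w l ih =>
    intro j hj y
    simp only [List.length_cons] at hj
    let g : U →ₗ[K] U :=
      (LinearMap.mulLeft K (f x)).comp (LinearMap.mulRight K ((l.map f).prod * f z))
    have hg : ∀ u, g u = f x * (u * ((l.map f).prod * f z)) := fun u => rfl
    have := aux_lin_s7 (K := K) g (f y) (f w) (j + 1) (by omega) (by
      intro t
      have := ih (j + 1) (by omega) (y + t • w)
      rw [hg]
      simpa [mul_assoc] using this)
    rw [map_sum, Finset.sum_congr rfl
      (g := fun _ => f x * f y ^ j * ((w :: l).map f).prod * f z)] at this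
    · simp only [Finset.sum_const, Finset.card_range] at this
      apply aux_tf K ((j + 1 : ℕ) : ℤ) (by omega)
      rw [natCast_zsmul]
      exact this
    · intro i hi
      have hi := Finset.mem_range.1 hi
      have := aux_perm_s7 f C1 C2 x z (l := List.replicate i y ++ w :: (List.replicate (j - i) y ++ l))
        (l' := List.replicate j y ++ w :: l) (by
          refine List.perm_middle.trans (List.Perm.trans ?_ List.perm_middle.symm)
          rw [← List.append_assoc, ← List.replicate_add]
          rw [show i + (j - i) = j by omega]) [] (by simp; omega)
      simp at this
      rw [hg]
      simpa [mul_assoc] using this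

theorem aux_foldl (l : List A) : ∀ x : A, f (l.foldl (· * ·) x) = f x * (l.map f).prod := by
  induction l with
  | nil => intro x; simp
  | cons b l ih => intro x; rw [List.foldl_cons, ih, map_mul]; simp [mul_assoc]

end main

/-- Let `K` be a field of characteristic zero, `n ≥ 1`, and `A` an associative
(not necessarily unital) `K`-algebra satisfying the standard identity
`S₃(x,y,z) = 0` and `x^n = 0`. Then every product of `n + 1` elements of `A`
vanishes; in particular for `n = 3` one has `(xy - yx)² = 0`. -/
theorem stmt_7 (K : Type*) [Field K] [CharZero K]
    (A : Type*) [NonUnitalRing A] [Module K A] [SMulCommClass K A A] [IsScalarTower K A A]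
    (n : ℕ) (hn : 1 ≤ n)
    (h1 : ∀ x y z : A,
      x * y * z + y * z * x + z * x * y - y * x * z - x * z * y - z * y * x = 0)
    (h2 : ∀ x : A, powSucc x (n - 1) = 0) :
    (∀ (x : A) (l : List A), l.length = n → l.foldl (· * ·) x = 0) ∧
    (n = 3 → ∀ x y : A, (x * y - y * x) * (x * y - y * x) = 0) := by
  have N3 : n = 3 → ∀ a b c d : A, a * b * c * d = 0 := by
    rintro rfl
    exact aux_n3 K h1 (fun x => by simpa [powSucc] using h2 x)
  refine ⟨?_, ?_⟩
  · intro x l hl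
    rcases (by omega : n = 1 ∨ n = 2 ∨ n = 3 ∨ 4 ≤ n) with h | h | h | h
    · subst h
      have := h2 (l.foldl (· * ·) x)
      simpa [powSucc] using this
    · subst h
      have sq : ∀ x : A, x * x = 0 := fun x => by simpa [powSucc] using h2 x
      have an : ∀ x y : A, x * y = - (y * x) := by
        intro x y
        have a1 := sq (x + y)
        have a2 := sq x
        have a3 := sq y
        simp only [mul_add, add_mul] at a1
        linear_combination (norm := abel) a1 - a2 - a3
      match l, hl with
      | [y, z], _ =>
        simp only [List.foldl_cons, List.foldl_nil]
        apply aux_tf K 6 (by norm_num)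
        have h := h1 x y z
        have e1 : y * x * z = - (x * y * z) := by rw [an y x, neg_mul]
        have e2 : x * z * y = - (x * y * z) := by rw [mul_assoc, an z y, mul_neg, mul_assoc]
        have e3 : z * x * y = x * y * z := by rw [an z x, neg_mul, e2, neg_neg]
        have e4 : y * z * x = x * y * z := by rw [mul_assoc, an z x, mul_neg, ← mul_assoc, e1, neg_neg]
        have e5 : z * y * x = - (x * y * z) := by rw [an z y, neg_mul, e4]
        rw [e1, e2, e3, e4, e5] at h
        linear_combination (norm := abel) h
    · match l, hl.trans h with
      | [b, c, d], _ => exact N3 h x b c d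
    · obtain ⟨k, rfl⟩ : ∃ k, n = k + 2 := ⟨n - 2, by omega⟩
      have E1 := aux_E1 h1
      have E3 := aux_E3 K E1
      have C1 := aux_C1 K E1 E3
      have C2 := aux_C2 K E1 E3
      let f : A →ₙₐ[K] Unitization K A := Unitization.inrNonUnitalAlgHom K A
      have finj : Function.Injective f := Unitization.inr_injective
      apply finj
      rw [map_zero, aux_foldl]
      rcases List.eq_nil_or_concat l with rfl | ⟨l', z, rfl⟩
      · simp at hl
      · have := aux_polar_s7 f C1 C2 k (by omega) x z
          (fun y => aux_core f C1 C2 E3 k (by omega) h2 x y z) l' 0 (by simpa using hl) x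
        simpa [mul_assoc] using this
  · intro h x y
    have := N3 h (x * y - y * x) x y
    have := N3 h
    simp only [mul_sub, sub_mul, ← mul_assoc, this, sub_zero]
end

section
/- Let K be a field of characteristic zero and let A be an associative (not necessarily unital) K-algebra satisfying x³ = 0 for all x ∈ A. Then xy²x = yx²y for all x, y ∈ A. -/
/-- Let `K` be a field of characteristic zero and `A` an associative (not necessarily
unital) `K`-algebra satisfying `x³ = 0`. Then `xy²x = yx²y` for all `x, y ∈ A`. -/
theorem stmt_8 (K : Type*) [Field K] [CharZero K]
    (A : Type*) [NonUnitalRing A] [Module K A] [SMulCommClass K A A] [IsScalarTower K A A]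
    (h : ∀ x : A, x * x * x = 0) :
    ∀ x y : A, x * (y * y) * x = y * (x * x) * y := by
  have two : ∀ a : A, a + a = 0 → a = 0 := by
    intro a ha
    have h2 : (2 : K) • a = 0 := by rw [two_smul, ha]
    exact (smul_eq_zero.mp h2).resolve_left two_ne_zero
  have P : ∀ x y : A, x * x * y + x * y * x + y * x * x = 0 := by
    intro x y
    apply two
    have e : x * x * y + x * y * x + y * x * x + (x * x * y + x * y * x + y * x * x)
        = (x + y) * (x + y) * (x + y) - (x - y) * (x - y) * (x - y)
          - y * y * y - y * y * y := by
      simp only [mul_add, add_mul, mul_sub, sub_mul]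
      abel
    rw [e, h, h, h]
    simp
  intro x y
  have e : x * (y * y) * x - y * (x * x) * y
      = x * (y * y * x + y * x * y + x * y * y)
        - (x * x * y + x * y * x + y * x * x) * y := by
    simp only [mul_add, add_mul, mul_assoc]
    abel
  rw [P, P, mul_zero, zero_mul, sub_zero] at e
  exact sub_eq_zero.mp e
end

section
/- Let K be a field of characteristic zero and let A be an associative (not necessarily unital) K-algebra satisfying x³ = 0 for all x ∈ A. Then for all x, y ∈ A: x²yx + xyx² = 0, x²y² = yxyx, and xyxy = y²x². -/
/-- Let `K` be a field of characteristic zero and `A` an associative (not necessarily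
unital) `K`-algebra satisfying `x³ = 0`. Then `x²yx + xyx² = 0`, `x²y² = yxyx` and
`xyxy = y²x²` for all `x, y ∈ A`. -/
theorem stmt_10 (K : Type*) [Field K] [CharZero K]
    (A : Type*) [NonUnitalRing A] [Module K A] [SMulCommClass K A A] [IsScalarTower K A A]
    (h : ∀ x : A, x * x * x = 0) :
    ∀ x y : A,
      x * x * y * x + x * y * (x * x) = 0 ∧
      x * x * (y * y) = y * x * y * x ∧
      x * y * x * y = y * y * (x * x) := by
  have P : ∀ x y : A, x * (x * y) + x * (y * x) + y * (x * x) = 0 := by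
    intro x y
    have h1 := h (x + y)
    have h2 := h (x - y)
    have hx := h x
    have hy := h y
    simp only [mul_add, add_mul, mul_sub, sub_mul, mul_assoc] at h1 h2 hx hy
    have h3 : (2 : K) • (x * (x * y) + x * (y * x) + y * (x * x)) = 0 := by
      rw [two_smul]
      have e : ∀ a b c d e f g i : A, a + b + (c + d) + (e + f + (g + i)) = 0 →
          a - b - (c - d) - (e - f - (g - i)) = 0 → i = 0 →
          b + c + e + (b + c + e) = 0 := by
        intro a b c d e f g i k1 k2 k3
        have : b + c + e + (b + c + e) = (a + b + (c + d) + (e + f + (g + i)))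
          - (a - b - (c - d) - (e - f - (g - i))) - (i + i) := by abel
        rw [this, k1, k2, k3]; simp
      apply e (x * (x * x)) _ _ (x * (y * y)) _ (y * (x * y)) (y * (y * x)) (y * (y * y)) _ _ hy
      · rw [← h1]; abel
      · rw [← h2]; abel
    exact (smul_eq_zero.mp h3).resolve_left two_ne_zero
  intro x y
  have q1 := congrArg (x * ·) (P x y)
  have q2 := congrArg (· * x) (P y x)
  have q3 := congrArg (x * ·) (P y x)
  have q4 := P x (y * y)
  have hx := h x
  have hxy : x * (x * (x * y)) = 0 := by rw [← mul_assoc, ← mul_assoc, hx, zero_mul]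
  simp only [mul_add, add_mul, mul_assoc, mul_zero, zero_mul] at q1 q2 q3 q4 ⊢
  refine ⟨?_, ?_, ?_⟩
  · rw [hxy, zero_add] at q1
    exact q1
  · rw [← sub_eq_zero, ← sub_eq_zero.mpr (q4.trans q2.symm)]; abel
  · rw [← sub_eq_zero, ← sub_eq_zero.mpr (q3.trans q4.symm)]; abel
end

section
/- Let K be a field of characteristic zero and let A be an associative (not necessarily unital) K-algebra satisfying x³ = 0 for all x ∈ A. Then x²yx² = 0 for all x, y ∈ A. -/
/-- Let `K` be a field of characteristic zero and `A` an associative (not necessarily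
unital) `K`-algebra satisfying `x³ = 0`. Then `x²yx² = 0` for all `x, y ∈ A`. -/
theorem stmt_11 (K : Type*) [Field K] [CharZero K]
    (A : Type*) [NonUnitalRing A] [Module K A] [SMulCommClass K A A] [IsScalarTower K A A]
    (h : ∀ x : A, x * x * x = 0) :
    ∀ x y : A, x * x * y * (x * x) = 0 := by
  intro x y
  have e : (2 : K) • (x * x * y + x * y * x + y * x * x) = 0 := by
    have h1 := h (x + y)
    have h2 := h (x - y)
    have h3 : (x + y) * (x + y) * (x + y) - (x - y) * (x - y) * (x - y) - (y * y * y + y * y * y)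
        = (2 : K) • (x * x * y + x * y * x + y * x * x) := by
      rw [two_smul]
      simp only [mul_add, add_mul, mul_sub, sub_mul]
      abel
    rw [← h3, h1, h2, h y]
    simp
  have e2 : x * x * y + x * y * x + y * x * x = 0 :=
    (smul_eq_zero_iff_right (two_ne_zero : (2 : K) ≠ 0)).mp e
  have h4 : x * (x * x) = 0 := by rw [← mul_assoc, h x]
  have e3 : (x * x * y + x * y * x + y * x * x) * (x * x) = 0 := by rw [e2, zero_mul]
  rw [add_mul, add_mul, mul_assoc (x * y) x, mul_assoc (y * x) x, h4] at e3
  simpa using e3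
end

section
/- Let K be a field of characteristic zero and let A be an associative (not necessarily unital) K-algebra satisfying x³ = 0 for all x ∈ A. Then for all x, y ∈ A: xyxyx = 0, x²y²x = −xy²x², x²y²x = xyx²y, x²y²x = −x²yxy, x²y²x = yxyx², and x²y²x = −yx²yx. -/
theorem cube_polar (A : Type*) [NonUnitalRing A] (h : ∀ x : A, x * x * x = 0) (a b c : A) :
    a * (b * c) + a * (c * b) + b * (a * c) + b * (c * a) + c * (a * b) + c * (b * a) = 0 := by
  have h1 := h (a + b + c)
  have h2 := h (a + b)
  have h3 := h (a + c)
  have h4 := h (b + c)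
  have h5 := h a
  have h6 := h b
  have h7 := h c
  simp only [mul_add, add_mul, mul_assoc] at *
  have : ∀ p q r s t u v : A, p = 0 → q = 0 → r = 0 → s = 0 → t = 0 → u = 0 → v = 0 →
      p - q - r - s + t + u + v = 0 := by
    intros; simp [*]
  have h8 := this _ _ _ _ _ _ _ h1 h2 h3 h4 h5 h6 h7
  rw [← h8]
  abel



/-- Let `K` be a field of characteristic zero and `A` an associative (not necessarily
unital) `K`-algebra satisfying `x³ = 0`. Then `xyxyx = 0` and
`x²y²x = -xy²x² = xyx²y = -x²yxy = yxyx² = -yx²yx` for all `x, y ∈ A`. -/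
theorem stmt_12 (K : Type*) [Field K] [CharZero K]
    (A : Type*) [NonUnitalRing A] [Module K A] [SMulCommClass K A A] [IsScalarTower K A A]
    (h : ∀ x : A, x * x * x = 0) :
    ∀ x y : A,
      x * y * x * y * x = 0 ∧
      x * x * (y * y) * x = -(x * (y * y) * (x * x)) ∧
      x * x * (y * y) * x = x * y * (x * x) * y ∧
      x * x * (y * y) * x = -(x * x * y * x * y) ∧
      x * x * (y * y) * x = y * x * y * (x * x) ∧
      x * x * (y * y) * x = -(y * (x * x) * y * x) := by
  intro x y
  have e0 := congrArg (fun z => z * (y * y)) (cube_polar A h x x x)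
  have e1 := congrArg (fun z => z * y) (cube_polar A h x x (x * y))
  have e2 := congrArg (fun z => z * y) (cube_polar A h x (x * x) y)
  have e3 := cube_polar A h x x (x * y * y)
  have e4 := cube_polar A h x (x * x) (y * y)
  have e5 := cube_polar A h x (x * x * y) y
  have e6 := cube_polar A h (x * x) (x * y) y
  have e7 := congrArg (fun z => x * z) (cube_polar A h x (x * y) y)
  have e8 := congrArg (fun z => x * z) (cube_polar A h (x * x) y y)
  simp only [mul_add, add_mul, mul_assoc, mul_zero, zero_mul] at e0 e1 e2 e3 e4 e5 e6 e7 e8 ⊢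
  refine ⟨?_, ?_, ?_, ?_, ?_, ?_⟩
  · linear_combination (norm := module) (1/6 : K) • e0 + (-1 : K) • e1 + (-1/2 : K) • e3 + (1 : K) • e7 + (1/2 : K) • e8
  · linear_combination (norm := module) (-1/6 : K) • e0 + (1/2 : K) • e3
  · linear_combination (norm := module) (1/2 : K) • e3 + (-1/2 : K) • e8
  · linear_combination (norm := module) (-1/6 : K) • e0 + (1/2 : K) • e1 + (1/2 : K) • e3 + (-1/2 : K) • e8
  · linear_combination (norm := module) (-1/4 : K) • e0 + (1/4 : K) • e1 + (1/2 : K) • e2 + (1/2 : K) • e3 + (-1 : K) • e6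
  · linear_combination (norm := module) (1/12 : K) • e0 + (-1/4 : K) • e1 + (-1/2 : K) • e2 + (1 : K) • e5
end

section
/- Let K be a field of characteristic zero and let A be an associative (not necessarily unital) K-algebra satisfying x³ = 0 for all x ∈ A. Then xyxzx = 0 for all x, y, z ∈ A. -/
theorem lin_aux {A : Type*} [NonUnitalRing A] (h : ∀ x : A, x * x * x = 0) (a b c : A) :
    a * (b * c) + a * (c * b) + b * (a * c) + b * (c * a) + c * (a * b) + c * (b * a) = 0 := by
  have key : a * (b * c) + a * (c * b) + b * (a * c) + b * (c * a) + c * (a * b) + c * (b * a)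
      = (a + b + c) * (a + b + c) * (a + b + c) - (a + b) * (a + b) * (a + b)
        - (a + c) * (a + c) * (a + c) - (b + c) * (b + c) * (b + c)
        + a * a * a + b * b * b + c * c * c := by
    simp only [mul_add, add_mul, mul_assoc]
    abel
  rw [key]
  simp only [h]
  simp

/-- Let `K` be a field of characteristic zero and `A` an associative (not necessarily
unital) `K`-algebra satisfying `x³ = 0`. Then `xyxzx = 0` for all `x, y, z ∈ A`. -/
theorem stmt_13 (K : Type*) [Field K] [CharZero K]
    (A : Type*) [NonUnitalRing A] [Module K A] [SMulCommClass K A A] [IsScalarTower K A A]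
    (h : ∀ x : A, x * x * x = 0) :
    ∀ x y z : A, x * y * x * z * x = 0 := by
  intro x y z
  have h1 := lin_aux h x x (y * z * x)
  have h2 := lin_aux h x (x * x * y) z
  have h3 : x * x * x * (y * z) = 0 := by rw [h, zero_mul]
  have h4 := lin_aux h x y (z * x * x)
  have h5 := lin_aux h x x (y * x * z)
  have h6 := lin_aux h x (x * x) (y * z)
  have h7 := lin_aux h x (x * y) (z * x)
  have key : (6 : ℤ) • (x * y * x * z * x) = 0 := by
    simp only [mul_assoc] at *
    have e := congrArg₂ (· + ·) (congrArg (fun t => (-3 : ℤ) • t) h1)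
      (congrArg₂ (· + ·) (congrArg (fun t => (-2 : ℤ) • t) h2)
      (congrArg₂ (· + ·) (congrArg (fun t => (-6 : ℤ) • t) h3)
      (congrArg₂ (· + ·) (congrArg (fun t => (-2 : ℤ) • t) h4)
      (congrArg₂ (· + ·) (congrArg (fun t => (1 : ℤ) • t) h5)
      (congrArg₂ (· + ·) (congrArg (fun t => (4 : ℤ) • t) h6)
        (congrArg (fun t => (4 : ℤ) • t) h7))))))
    simp only [smul_zero, add_zero] at e
    rw [← e]
    abel
  have k2 : (6 : K) • (x * y * x * z * x) = 0 := by
    rw [← key, ← Int.cast_smul_eq_zsmul K]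
    norm_num
  exact (smul_eq_zero.mp k2).resolve_left (by norm_num)
end

section
/- Let K be a field of characteristic zero and let A be an associative (not necessarily unital) K-algebra satisfying x³ = 0 for all x ∈ A. Then x²zy² = 0 for all x, y, z ∈ A. -/
theorem stmt_14 (K : Type*) [Field K] [CharZero K]
    (A : Type*) [NonUnitalRing A] [Module K A] [SMulCommClass K A A] [IsScalarTower K A A]
    (h : ∀ x : A, x * x * x = 0) :
    ∀ x y z : A, x * x * z * (y * y) = 0 := by
  have lin : ∀ a b c : A, a * b * c + a * c * b + b * a * c + b * c * a + c * a * b + c * b * a = 0 := by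
    intro a b c
    have e1 := h (a + b + c)
    have e2 := h (a + b)
    have e3 := h (a + c)
    have e4 := h (b + c)
    have e5 := h a
    have e6 := h b
    have e7 := h c
    simp only [mul_add, add_mul, mul_assoc] at *
    linear_combination (norm := abel) e1 - e2 - e3 - e4 + e5 + e6 + e7
  have L : ∀ (u : A) {s : A}, s = 0 → u * s = 0 := by
    intro u s hs
    rw [hs, mul_zero]
  have R : ∀ (u : A) {s : A}, s = 0 → s * u = 0 := by
    intro u s hs
    rw [hs, zero_mul]
  intro x y z
  have h0 := lin (x * x * z) (y) (y)
  have h1 := R (z * y) (lin (x) (x) (y))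
  have h2 := L (x * x) (lin (y) (y) (z))
  have h3 := L (x) (lin (x * z) (y) (y))
  have h4 := R (z) (lin (x) (x) (y * y))
  clear h lin L R
  simp only [mul_add, add_mul, mul_assoc] at *
  linear_combination (norm := module) ((1/6) : K) • h0 + ((-1/6) : K) • h1 + ((1/6) : K) • h2 + ((1/6) : K) • h3 + ((-1/6) : K) • h4
end

section
/- Let K be a field of characteristic zero and let A be an associative (not necessarily unital) K-algebra satisfying x³ = 0 for all x ∈ A. Then for all x, y, z, t ∈ A one has x²·S₃(y,z,t) + S₃(y,z,t)·x² = 0, where S₃(y,z,t) = yzt + zty + tyz − zyt − ytz − tzy. -/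
/-- Let `K` be a field of characteristic zero and `A` an associative (not necessarily
unital) `K`-algebra satisfying `x³ = 0`. Then `x²·S₃(y,z,t) + S₃(y,z,t)·x² = 0` for all
`x, y, z, t ∈ A`, where `S₃(y,z,t) = yzt + zty + tyz - zyt - ytz - tzy`. -/
theorem stmt_15 (K : Type*) [Field K] [CharZero K]
    (A : Type*) [NonUnitalRing A] [Module K A] [SMulCommClass K A A] [IsScalarTower K A A]
    (h : ∀ x : A, x * x * x = 0) :
    ∀ x y z t : A,
      x * x * (y * z * t + z * t * y + t * y * z - z * y * t - y * t * z - t * z * y) +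
        (y * z * t + z * t * y + t * y * z - z * y * t - y * t * z - t * z * y) * (x * x)
      = 0 := by
  intro x y z t
  have T : ∀ a b c : A, a*(b*c)+a*(c*b)+b*(a*c)+b*(c*a)+c*(a*b)+c*(b*a) = 0 := by
    intro a b c
    have h1 := h (a+b+c)
    have h2 := h (a+b)
    have h3 := h (a+c)
    have h4 := h (b+c)
    have h5 := h a
    have h6 := h b
    have h7 := h c
    simp only [mul_add, add_mul, mul_assoc] at *
    linear_combination (norm := module) h1 - h2 - h3 - h4 + h5 + h6 + h7
  have L : ∀ u : A, ∀ {w : A}, w = 0 → u * w = 0 := by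
    rintro u w rfl
    exact mul_zero u
  have R : ∀ u : A, ∀ {w : A}, w = 0 → w * u = 0 := by
    rintro u w rfl
    exact zero_mul u
  have e0 := T (x) (x) (y*t*z)
  have e1 := T (x) (x*y*t) (z)
  have e2 := R (z) (L (y) (T (t) (x) (x)))
  have e3 := T (x*x) (y) (z*t)
  have e4 := T (t*z*x) (x) (y)
  have e5 := T (t*z*y) (x) (x)
  have e6 := R (t*z) (T (x) (x) (y))
  have e7 := T (t) (x) (z*x*y)
  have e8 := R (t) (L (z) (T (x) (x) (y)))
  have e9 := T (x) (y*x*t) (z)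
  have e10 := R (y) (L (t) (T (x) (x) (z)))
  have e11 := R (t) (T (x*x) (y) (z))
  have e12 := T (t) (x*x) (y*z)
  have e13 := T (t*x*x) (y) (z)
  have e14 := T (x) (x*t) (z*y)
  have e15 := L (t) (T (x) (x) (z*y))
  have e16 := T (t*x*z) (x) (y)
  have e17 := T (t*z) (x*x) (y)
  have e18 := L (y*t) (T (x) (x) (z))
  clear T L R h
  simp only [mul_add, add_mul, mul_sub, sub_mul, mul_assoc] at *
  linear_combination (norm := module) (-1/3 : K) • e0 + (1/3 : K) • e1 + (1/3 : K) • e2 + (1 : K) • e3 + (1/3 : K) • e4 + (-1/6 : K) • e5 + (1/6 : K) • e6 + (-1/3 : K) • e7 + (1/3 : K) • e8 + (-1/3 : K) • e9 + (1/3 : K) • e10 + (-1 : K) • e11 + (1 : K) • e12 + (-1 : K) • e13 + (1/3 : K) • e14 + (1/6 : K) • e15 + (-1/3 : K) • e16 + (-1 : K) • e17 + (1/6 : K) • e18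
end

section
/- Let K be a field of characteristic zero and let A be an associative (not necessarily unital) K-algebra satisfying x³ = 0 for all x ∈ A. Then A satisfies the standard identity of degree 5: S₅(x₁,x₂,x₃,x₄,x₅) = Σ_{σ∈S₅} sign(σ)·x_{σ(1)}x_{σ(2)}x_{σ(3)}x_{σ(4)}x_{σ(5)} = 0 for all x₁,…,x₅ ∈ A. -/
theorem cube_lin {A : Type*} [NonUnitalRing A] (h : ∀ x : A, x * x * x = 0) (a b c : A) :
    a * b * c + b * a * c + a * c * b + b * c * a + c * a * b + c * b * a = 0 := by
  have e : a * b * c + b * a * c + a * c * b + b * c * a + c * a * b + c * b * a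
    = (a + b + c) * (a + b + c) * (a + b + c) - (a + b) * (a + b) * (a + b)
      - (a + c) * (a + c) * (a + c) - (b + c) * (b + c) * (b + c)
      + a * a * a + b * b * b + c * c * c := by
    simp only [mul_add, add_mul]
    abel
  rw [e]
  simp only [h]
  simp

theorem stdPoly_shift {A : Type*} [NonUnitalRing A] (x : Fin 5 → A) (τ : Equiv.Perm (Fin 5))
    (hτ : Equiv.Perm.sign τ = 1) :
    stdPoly x = ∑ σ : Equiv.Perm (Fin 5), (Equiv.Perm.sign σ : ℤ) • prodTuple (x ∘ (σ * τ)) := by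
  unfold stdPoly
  rw [← Equiv.sum_comp (Equiv.mulRight τ)]
  simp [hτ]

def tau1 : Equiv.Perm (Fin 5) := ⟨![2,3,0,1,4], ![2,3,0,1,4], by decide, by decide⟩
def tau2 : Equiv.Perm (Fin 5) := ⟨![0,1,4,2,3], ![0,1,3,4,2], by decide, by decide⟩
def tau3 : Equiv.Perm (Fin 5) := ⟨![2,3,4,0,1], ![3,4,0,1,2], by decide, by decide⟩
def tau4 : Equiv.Perm (Fin 5) := ⟨![4,0,1,2,3], ![1,2,3,4,0], by decide, by decide⟩
def tau5 : Equiv.Perm (Fin 5) := ⟨![4,2,3,0,1], ![3,4,1,2,0], by decide, by decide⟩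

/-- Let `K` be a field of characteristic zero and `A` an associative (not necessarily
unital) `K`-algebra satisfying `x³ = 0`. Then `A` satisfies the standard identity of
degree 5: `S₅(x₁,…,x₅) = 0`. -/
theorem stmt_16 (K : Type*) [Field K] [CharZero K]
    (A : Type*) [NonUnitalRing A] [Module K A] [SMulCommClass K A A] [IsScalarTower K A A]
    (h : ∀ x : A, x * x * x = 0) :
    ∀ x : Fin 5 → A, stdPoly x = 0 := by
  intro x
  have key : (6 : K) • stdPoly x = 0 := by
    have e : (6 : K) • stdPoly x = stdPoly x + stdPoly x + stdPoly x + stdPoly x + stdPoly x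
        + stdPoly x := by module
    rw [e]
    nth_rewrite 6 [stdPoly_shift x tau5 (by decide)]
    nth_rewrite 5 [stdPoly_shift x tau4 (by decide)]
    nth_rewrite 4 [stdPoly_shift x tau3 (by decide)]
    nth_rewrite 3 [stdPoly_shift x tau2 (by decide)]
    nth_rewrite 2 [stdPoly_shift x tau1 (by decide)]
    nth_rewrite 1 [stdPoly_shift x 1 (by decide)]
    simp only [← Finset.sum_add_distrib, ← smul_add]
    refine Finset.sum_eq_zero fun σ _ => ?_
    have := cube_lin h (x (σ 0) * x (σ 1)) (x (σ 2) * x (σ 3)) (x (σ 4))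
    convert smul_zero _
    rw [← this]
    simp [prodTuple, List.ofFn_succ, tau1, tau2, tau3, tau4, tau5, mul_assoc]
  exact (smul_eq_zero.mp key).resolve_left (by norm_num)
end

section
/- Let K be a field of characteristic zero and let A be an associative (not necessarily unital) K-algebra satisfying x³ = 0 for all x ∈ A and x²(yz − zy) = (yz − zy)x² for all x, y, z ∈ A. Then for all x, y, z, t ∈ A: tx²(yz − zy) = 0 and tyzx² = 0; consequently S₃(y,z,t)·x² = 0 and d₃(y,z,t;x²) = 0, where S₃(y,z,t) = yzt + zty + tyz − zyt − ytz − tzy and d₃(y,z,t;x²) = Σ_{σ} sign(σ)·u_{σ(1)}x²u_{σ(2)}u_{σ(3)} with (u₁,u₂,u₃) = (y,z,t). -/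
set_option maxHeartbeats 4000000 in
private theorem aux1 {A : Type*} [NonUnitalRing A]
    (hP : ∀ a b c : A, a * b * c + a * c * b + b * a * c + b * c * a + c * a * b + c * b * a = 0)
    (hQ : ∀ a b c d : A, (a * b + b * a) * (c * d - d * c) - (c * d - d * c) * (a * b + b * a) = 0)
    (x y z t : A) : (18 : ℤ) • (t * (x * x) * (y * z - z * y)) = 0 := by
  have e0 := hQ t x x (y * z)
  have e1 := hP (x * x * t) y z
  have e2 := hP x (x * t) (y * z)
  have e3 := congrArg (· * t) (congrArg (z * ·) (hP x x y))
  have e4 := congrArg ((z * x) * ·) (hP t x y)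
  have e5 := congrArg (z * ·) (hP x x (y * t))
  have e6 := congrArg (· * (x * x)) (hP t y z)
  have e7 := hQ x x y (z * t)
  have e8 := hP t (x * x * y) z
  have e9 := hP (t * z) (x * x) y
  have e10 := congrArg (· * y) (congrArg (z * ·) (hP t x x))
  have e11 := hP (t * x) x (y * z)
  have e12 := hQ x x (t * y) z
  have e13 := congrArg (z * ·) (hP (t * y) x x)
  have e14 := hQ (x * y) z t x
  have e15 := congrArg ((y * z) * ·) (hP t x x)
  have e16 := hP t x (x * y * z)
  have e17 := congrArg (· * z) (hQ t x x y)
  have e18 := hP (x * t * x) y z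
  have e19 := congrArg (· * y) (hP x (x * t) z)
  have e20 := congrArg (t * ·) (hP x (x * y) z)
  have e21 := congrArg ((t * z) * ·) (hP x x y)
  have e22 := hP x y (z * x * t)
  have e23 := congrArg (· * z) (hQ x y t x)
  have e24 := congrArg (· * (x * z)) (hP t x y)
  have e25 := hQ t y (x * x) z
  have e26 := congrArg (· * t) (hP x x (z * y))
  have e27 := congrArg (· * t) (hQ x x y z)
  have e28 := hQ y (z * x) t x
  have e29 := hQ (x * x) y t z
  have e30 := hP x (y * x * t) z
  have e31 := congrArg (· * z) (congrArg (x * ·) (hP t x y))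
  have e32 := hP x (x * t * z) y
  have e33 := congrArg (y * ·) (hP t x (x * z))
  have e34 := congrArg (· * x) (congrArg (t * ·) (hP x y z))
  have e35 := congrArg (t * ·) (hP x (y * x) z)
  have e36 := congrArg (x * ·) (hQ x y t z)
  have e37 := hQ x z t (x * y)
  have e38 := congrArg (x * ·) (hQ t z x y)
  have e39 := congrArg (y * ·) (hP (t * x) x z)
  have e40 := congrArg (· * z) (hP t x (y * x))
  have e41 := congrArg ((x * y) * ·) (hP t x z)
  have e42 := congrArg (· * y) (hP (t * x) x z)
  have e43 := hP (x * t) (y * x) z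
  have e44 := congrArg (· * (z * y)) (hP t x x)
  have e45 := congrArg (· * t) (congrArg (x * ·) (hP x y z))
  simp only [mul_add, add_mul, mul_sub, sub_mul, mul_assoc, mul_zero, zero_mul] at e0 e1 e2 e3 e4 e5 e6 e7 e8 e9 e10 e11 e12 e13 e14 e15 e16 e17 e18 e19 e20 e21 e22 e23 e24 e25 e26 e27 e28 e29 e30 e31 e32 e33 e34 e35 e36 e37 e38 e39 e40 e41 e42 e43 e44 e45 ⊢
  linear_combination (norm := module) (2 : ℤ) • e0 +
    (2 : ℤ) • e1 +
    (8 : ℤ) • e2 +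
    (-16 : ℤ) • e3 +
    (20 : ℤ) • e4 +
    (-1 : ℤ) • e5 +
    (2 : ℤ) • e6 +
    (2 : ℤ) • e7 +
    (14 : ℤ) • e8 +
    (-8 : ℤ) • e9 +
    (-7 : ℤ) • e10 +
    (14 : ℤ) • e11 +
    (1 : ℤ) • e12 +
    (-7 : ℤ) • e13 +
    (-12 : ℤ) • e14 +
    (-3 : ℤ) • e15 +
    (-6 : ℤ) • e16 +
    (-3 : ℤ) • e17 +
    (6 : ℤ) • e18 +
    (12 : ℤ) • e19 +
    (-12 : ℤ) • e20 +
    (6 : ℤ) • e21 +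
    (-12 : ℤ) • e22 +
    (3 : ℤ) • e23 +
    (6 : ℤ) • e24 +
    (-6 : ℤ) • e25 +
    (6 : ℤ) • e26 +
    (6 : ℤ) • e27 +
    (-6 : ℤ) • e28 +
    (6 : ℤ) • e29 +
    (-6 : ℤ) • e30 +
    (-12 : ℤ) • e31 +
    (6 : ℤ) • e32 +
    (6 : ℤ) • e33 +
    (-6 : ℤ) • e34 +
    (6 : ℤ) • e35 +
    (6 : ℤ) • e36 +
    (-6 : ℤ) • e37 +
    (6 : ℤ) • e38 +
    (-6 : ℤ) • e39 +
    (-6 : ℤ) • e40 +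
    (6 : ℤ) • e41 +
    (-6 : ℤ) • e42 +
    (6 : ℤ) • e43 +
    (-6 : ℤ) • e44 +
    (-6 : ℤ) • e45

set_option maxHeartbeats 4000000 in
private theorem aux2 {A : Type*} [NonUnitalRing A]
    (hP : ∀ a b c : A, a * b * c + a * c * b + b * a * c + b * c * a + c * a * b + c * b * a = 0)
    (hQ : ∀ a b c d : A, (a * b + b * a) * (c * d - d * c) - (c * d - d * c) * (a * b + b * a) = 0)
    (x y z t : A) : (36 : ℤ) • (t * y * z * (x * x)) = 0 := by
  have e0 := hP (t * y * z) x x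
  have e1 := congrArg (· * (z * x)) (hP t x y)
  have e2 := congrArg (t * ·) (hP x x (y * z))
  have e3 := congrArg (· * z) (hP t x (x * y))
  have e4 := congrArg (· * z) (hP x x (y * t))
  have e5 := hP x x (y * t * z)
  have e6 := congrArg (· * (t * z)) (hP x x y)
  have e7 := congrArg (y * ·) (hP (t * z) x x)
  have e8 := congrArg ((y * t) * ·) (hP x x z)
  have e9 := hP t x (y * x * z)
  have e10 := hP t x (x * y * z)
  have e11 := congrArg (· * z) (hP (t * y) x x)
  have e12 := congrArg (· * t) (hP x x (y * z))
  have e13 := congrArg (· * (z * t)) (hP x x y)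
  have e14 := congrArg (· * t) (congrArg (y * ·) (hP x x z))
  have e15 := congrArg (y * ·) (hP x x (z * t))
  have e16 := congrArg (t * ·) (hP x x (z * y))
  have e17 := congrArg (· * y) (congrArg (t * ·) (hP x x z))
  have e18 := congrArg ((t * z) * ·) (hP x x y)
  have e19 := congrArg (· * t) (congrArg (z * ·) (hP x x y))
  have e20 := congrArg (· * y) (hP x x (z * t))
  have e21 := congrArg ((z * t) * ·) (hP x x y)
  have e22 := congrArg (· * (z * y)) (hP t x x)
  have e23 := hQ x x t (y * z)
  have e24 := hP t x (x * z * y)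
  have e25 := hP x x (z * y * t)
  have e26 := hP t x (z * x * y)
  have e27 := congrArg (· * y) (hP (t * z) x x)
  have e28 := congrArg (· * t) (hP x x (z * y))
  have e29 := congrArg (z * ·) (hP x x (y * t))
  have e30 := hP t (x * y) (z * x)
  have e31 := hP (t * x) (x * y) z
  have e32 := congrArg (· * x) (hP t (x * y) z)
  have e33 := hP t (x * x * z) y
  have e34 := hP (t * x) (x * z) y
  have e35 := congrArg (· * (y * z)) (hP t x x)
  have e36 := congrArg (· * (y * t)) (hP x x z)
  have e37 := congrArg (· * y) (hQ x x t z)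
  have e38 := hP t (x * x * y) z
  have e39 := hQ x x (t * z) y
  have e40 := hP (t * z * y) x x
  have e41 := congrArg (· * (y * x)) (hP t x z)
  have e42 := congrArg (· * y) (hP t x (x * z))
  have e43 := hP x x (z * t * y)
  have e44 := congrArg (· * (t * y)) (hP x x z)
  have e45 := congrArg (z * ·) (hP (t * y) x x)
  have e46 := congrArg (· * y) (congrArg (z * ·) (hP t x x))
  have e47 := hP x x (y * z * t)
  have e48 := hQ t x (x * y) z
  have e49 := congrArg ((t * y) * ·) (hP x x z)
  have e50 := hP (t * x * y) x z
  have e51 := congrArg (· * z) (congrArg (t * ·) (hP x x y))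
  have e52 := hQ t x (x * z) y
  simp only [mul_add, add_mul, mul_sub, sub_mul, mul_assoc, mul_zero, zero_mul] at e0 e1 e2 e3 e4 e5 e6 e7 e8 e9 e10 e11 e12 e13 e14 e15 e16 e17 e18 e19 e20 e21 e22 e23 e24 e25 e26 e27 e28 e29 e30 e31 e32 e33 e34 e35 e36 e37 e38 e39 e40 e41 e42 e43 e44 e45 e46 e47 e48 e49 e50 e51 e52 ⊢
  linear_combination (norm := module) (11 : ℤ) • e0 +
    (-22 : ℤ) • e1 +
    (-5 : ℤ) • e2 +
    (22 : ℤ) • e3 +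
    (5 : ℤ) • e4 +
    (-16 : ℤ) • e5 +
    (-11 : ℤ) • e6 +
    (11 : ℤ) • e7 +
    (11 : ℤ) • e8 +
    (4 : ℤ) • e9 +
    (2 : ℤ) • e10 +
    (-5 : ℤ) • e11 +
    (-1 : ℤ) • e12 +
    (-2 : ℤ) • e13 +
    (1 : ℤ) • e14 +
    (9 : ℤ) • e15 +
    (8 : ℤ) • e16 +
    (8 : ℤ) • e17 +
    (-18 : ℤ) • e18 +
    (-1 : ℤ) • e19 +
    (7 : ℤ) • e20 +
    (-8 : ℤ) • e21 +
    (-6 : ℤ) • e22 +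
    (-3 : ℤ) • e23 +
    (-8 : ℤ) • e24 +
    (9 : ℤ) • e25 +
    (-4 : ℤ) • e26 +
    (5 : ℤ) • e27 +
    (1 : ℤ) • e28 +
    (-9 : ℤ) • e29 +
    (6 : ℤ) • e30 +
    (-32 : ℤ) • e31 +
    (48 : ℤ) • e32 +
    (-16 : ℤ) • e33 +
    (-16 : ℤ) • e34 +
    (-3 : ℤ) • e35 +
    (2 : ℤ) • e36 +
    (3 : ℤ) • e37 +
    (10 : ℤ) • e38 +
    (-6 : ℤ) • e39 +
    (4 : ℤ) • e40 +
    (-8 : ℤ) • e41 +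
    (26 : ℤ) • e42 +
    (4 : ℤ) • e43 +
    (-13 : ℤ) • e44 +
    (4 : ℤ) • e45 +
    (9 : ℤ) • e46 +
    (-6 : ℤ) • e47 +
    (6 : ℤ) • e48 +
    (9 : ℤ) • e49 +
    (-24 : ℤ) • e50 +
    (4 : ℤ) • e51 +
    (-6 : ℤ) • e52

/-- Let `K` be a field of characteristic zero and `A` an associative (not necessarily
unital) `K`-algebra satisfying `x³ = 0` and `x²(yz - zy) = (yz - zy)x²`. Then for all
`x, y, z, t ∈ A` one has `tx²(yz - zy) = 0` and `tyzx² = 0`; consequently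
`S₃(y,z,t)·x² = 0` and `d₃(y,z,t;x²) = 0`, where
`S₃(y,z,t) = yzt + zty + tyz - zyt - ytz - tzy` and
`d₃(y,z,t;x²) = yx²zt + zx²ty + tx²yz - zx²yt - yx²tz - tx²zy`. -/
theorem stmt_19 (K : Type*) [Field K] [CharZero K]
    (A : Type*) [NonUnitalRing A] [Module K A] [SMulCommClass K A A] [IsScalarTower K A A]
    (h1 : ∀ x : A, x * x * x = 0)
    (h2 : ∀ x y z : A, x * x * (y * z - z * y) = (y * z - z * y) * (x * x)) :
    ∀ x y z t : A,
      t * (x * x) * (y * z - z * y) = 0 ∧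
      t * y * z * (x * x) = 0 ∧
      (y * z * t + z * t * y + t * y * z - z * y * t - y * t * z - t * z * y) * (x * x) = 0 ∧
      y * (x * x) * z * t + z * (x * x) * t * y + t * (x * x) * y * z
        - z * (x * x) * y * t - y * (x * x) * t * z - t * (x * x) * z * y = 0 := by
  have hP : ∀ a b c : A, a * b * c + a * c * b + b * a * c + b * c * a + c * a * b + c * b * a = 0 := by
    intro a b c
    have e1 := h1 (a + b + c)
    have e2 := h1 (a + b)
    have e3 := h1 (a + c)
    have e4 := h1 (b + c)
    have e5 := h1 a
    have e6 := h1 b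
    have e7 := h1 c
    simp only [mul_add, add_mul, mul_assoc] at *
    linear_combination (norm := module) e1 - e2 - e3 - e4 + e5 + e6 + e7
  have hQ : ∀ a b c d : A,
      (a * b + b * a) * (c * d - d * c) - (c * d - d * c) * (a * b + b * a) = 0 := by
    intro a b c d
    have e1 := h2 (a + b) c d
    have e2 := h2 a c d
    have e3 := h2 b c d
    simp only [mul_add, add_mul, mul_sub, sub_mul, mul_assoc] at *
    linear_combination (norm := module) e1 - e2 - e3
  have hK : ∀ (n : ℤ) (a : A), n ≠ 0 → n • a = 0 → a = 0 := by
    intro n a hn h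
    rw [← Int.cast_smul_eq_zsmul K] at h
    exact (smul_eq_zero.mp h).resolve_left (Int.cast_ne_zero.mpr hn)
  have k1 : ∀ x y z t : A, t * (x * x) * (y * z - z * y) = 0 := fun x y z t =>
    hK _ _ (by norm_num) (aux1 hP hQ x y z t)
  have k2 : ∀ x y z t : A, t * y * z * (x * x) = 0 := fun x y z t =>
    hK _ _ (by norm_num) (aux2 hP hQ x y z t)
  intro x y z t
  refine ⟨k1 x y z t, k2 x y z t, ?_, ?_⟩
  · simp only [add_mul, sub_mul, k2]
    simp
  · have e1 := k1 x y z t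
    have e2 := k1 x z t y
    have e3 := k1 x t y z
    simp only [mul_sub, mul_assoc] at *
    linear_combination (norm := module) e1 + e2 + e3
end
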